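/- arXiv:1607.03286 — 13 statements merged into one kernel-verified Lean document; each statement's English description precedes it below -/
import Mathlib

section
/- Let D be a dcpo and let 𝒜 be a subset of the order sobrification D̂ of D. If 𝒜 is irreducible as a subset of D̂ (with respect to the Scott topology on D̂), then the union ⋃𝒜 is irreducible as a subset of D. -/
namespace HoZhao

variable {α : Type*}

/-- A set is Scott-closed if it is a lower set and contains the supremum of each of its
nonempty directed subsets. -/
def ScottClosed [Preorder α] (S : Set α) : Prop :=
  IsLowerSet S ∧ ∀ d : Set α, d ⊆ S → d.Nonempty → DirectedOn (· ≤ ·) d →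
    ∀ a : α, IsLUB d a → a ∈ S

/-- A nonempty set is irreducible if whenever it is covered by two Scott-closed sets it is
contained in one of them. -/
def ScottIrred [Preorder α] (A : Set α) : Prop :=
  A.Nonempty ∧ ∀ B C : Set α, ScottClosed B → ScottClosed C → A ⊆ B ∪ C → A ⊆ B ∨ A ⊆ C

/-- A dcpo: every nonempty directed subset has a supremum. -/
def IsDcpo (α : Type*) [Preorder α] : Prop :=
  ∀ d : Set α, d.Nonempty → DirectedOn (· ≤ ·) d → ∃ a : α, IsLUB d a

/-- The order sobrification: the poset of Scott-closed irreducible subsets, ordered by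
inclusion. -/
abbrev OrderSob (α : Type*) [Preorder α] :=
  {A : Set α // ScottClosed A ∧ ScottIrred A}

theorem below_closed [PartialOrder α] (B : Set α) (hB : ScottClosed B) :
    ScottClosed {A : OrderSob α | (A : Set α) ⊆ B} := by
  refine ⟨fun A A' h hA => Set.Subset.trans h hA, ?_⟩
  intro d hd hne hdir a ha
  -- the closure of the union of `d`
  let K : Set α := {x | ∀ P : Set α, ScottClosed P → (∀ A ∈ d, (A : Set α) ⊆ P) → x ∈ P}
  have hsub : ∀ A ∈ d, (A : Set α) ⊆ K := fun A hA x hx P _ hP => hP A hA hx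
  have hK : ScottClosed K := by
    refine ⟨fun x y hyx hx P hP h => hP.1 hyx (hx P hP h), ?_⟩
    intro e he hen hed b hb P hP h
    exact hP.2 e (fun x hx => he hx P hP h) hen hed b hb
  have hKi : ScottIrred K := by
    constructor
    · obtain ⟨A, hA⟩ := hne
      obtain ⟨x, hx⟩ := A.2.2.1
      exact ⟨x, hsub A hA hx⟩
    · intro P Q hP hQ hPQ
      by_cases h1 : ∀ A ∈ d, (A : Set α) ⊆ P
      · exact Or.inl fun x hx => hx P hP h1
      by_cases h2 : ∀ A ∈ d, (A : Set α) ⊆ Q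
      · exact Or.inr fun x hx => hx Q hQ h2
      exfalso
      push Not at h1 h2
      obtain ⟨A, hA, hAP⟩ := h1
      obtain ⟨A', hA', hAQ⟩ := h2
      obtain ⟨E, hE, hAE, hAE'⟩ := hdir A hA A' hA'
      rcases E.2.2.2 P Q hP hQ ((hsub E hE).trans hPQ) with h | h
      · exact hAP (Set.Subset.trans hAE h)
      · exact hAQ (Set.Subset.trans hAE' h)
  have haK : a ≤ (⟨K, hK, hKi⟩ : OrderSob α) := ha.2 fun A hA => hsub A hA
  intro x hx
  exact haK hx B hB hd

/-- If 𝒜 ⊆ D̂ is irreducible (w.r.t. the Scott topology of D̂), then ⋃𝒜 is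
irreducible as a subset of D. -/
theorem union_of_irreducible_family_is_irreducible [PartialOrder α] (hD : IsDcpo α)
    (𝒜 : Set (OrderSob α)) (h𝒜 : ScottIrred 𝒜) :
    ScottIrred (⋃ A ∈ 𝒜, (A : Set α)) := by
  constructor
  · obtain ⟨A, hA⟩ := h𝒜.1
    obtain ⟨x, hx⟩ := A.2.2.1
    exact ⟨x, Set.mem_biUnion hA hx⟩
  · intro B C hB hC h
    have := h𝒜.2 _ _ (below_closed B hB) (below_closed C hC) (fun A hA =>
      A.2.2.2 B C hB hC (Set.Subset.trans (Set.subset_biUnion_of_mem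
        (u := fun A : OrderSob α => (A : Set α)) hA) h))
    exact this.imp (fun h => Set.iUnion₂_subset h) (fun h => Set.iUnion₂_subset h)

end HoZhao
end

section
/- Let D be a dcpo and let 𝒜 be a subset of the order sobrification D̂ of D. If 𝒜 is Scott-closed as a subset of D̂, then the union ⋃𝒜 is Scott-closed as a subset of D. -/
namespace HoZhao

variable {α : Type*}

/-- Principal ideals are closed irreducible sets. -/
def principal [PartialOrder α] (x : α) : OrderSob α :=
  ⟨Set.Iic x, ⟨isLowerSet_Iic x, fun _ hd _ _ _ ha => ha.2 fun _ hy => hd hy⟩,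
    ⟨x, le_refl x⟩, fun _ _ hB hC h => (h (le_refl x)).imp
      (fun hx _ hy => hB.1 hy hx) (fun hx _ hy => hC.1 hy hx)⟩

/-- If 𝒜 ⊆ D̂ is Scott-closed, then ⋃𝒜 is Scott-closed as a subset of D. -/
theorem union_of_closed_family_is_closed [PartialOrder α] (hD : IsDcpo α)
    (𝒜 : Set (OrderSob α)) (h𝒜 : ScottClosed 𝒜) :
    ScottClosed (⋃ A ∈ 𝒜, (A : Set α)) := by
  have key : ∀ x : α, (x ∈ ⋃ A ∈ 𝒜, (A : Set α)) ↔ principal x ∈ 𝒜 := by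
    intro x
    simp only [Set.mem_iUnion]
    constructor
    · rintro ⟨A, hA, hx⟩
      have hle : principal x ≤ A := fun y hy => A.2.1.1 hy hx
      exact h𝒜.1 hle hA
    · intro h
      exact ⟨principal x, h, le_refl x⟩
  have mono : ∀ {x y : α}, x ≤ y → principal x ≤ principal y :=
    fun h z hz => le_trans hz h
  refine ⟨fun x y hyx hx => (key y).2 (h𝒜.1 (mono hyx) ((key x).1 hx)), ?_⟩
  intro d hd hne hdir a ha
  refine (key a).2 (h𝒜.2 (principal '' d) ?_ (hne.image _) ?_ _ ⟨?_, ?_⟩)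
  · rintro _ ⟨x, hx, rfl⟩
    exact (key x).1 (hd hx)
  · rintro _ ⟨x, hx, rfl⟩ _ ⟨y, hy, rfl⟩
    obtain ⟨z, hz, hxz, hyz⟩ := hdir x hx y hy
    exact ⟨_, ⟨z, hz, rfl⟩, mono hxz, mono hyz⟩
  · rintro _ ⟨x, hx, rfl⟩
    exact mono (ha.1 hx)
  · intro U hU y hy
    have haU : a ∈ U.1 := U.2.1.2 d
      (fun x hx => hU ⟨x, hx, rfl⟩ (le_refl x)) hne hdir a ha
    exact U.2.1.1 hy haU

end HoZhao
end

section
/- For every dcpo D, the order sobrification D̂ is strongly complete: every irreducible subset of D̂ (with respect to the Scott topology of D̂) has a supremum in D̂, namely the Scott closure of its union. -/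
namespace HoZhao

variable {α : Type*}

/-- The Scott closure of a set: the intersection of all Scott-closed sets containing it. -/
def scottClosure [Preorder α] (S : Set α) : Set α :=
  ⋂₀ {C : Set α | ScottClosed C ∧ S ⊆ C}

theorem scottClosed_scottClosure [Preorder α] (S : Set α) : ScottClosed (scottClosure S) := by
  refine ⟨fun a b hba ha C hC => hC.1.1 hba (ha C hC), fun d hd hne hdir a ha C hC => ?_⟩
  exact hC.1.2 d (fun x hx => hd hx C hC) hne hdir a ha

theorem subset_scottClosure' [Preorder α] (S : Set α) : S ⊆ scottClosure S :=
  fun _ hx _ hC => hC.2 hx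

theorem scottClosure_subset [Preorder α] {S C : Set α} (hC : ScottClosed C) (h : S ⊆ C) :
    scottClosure S ⊆ C := fun _ hx => hx C ⟨hC, h⟩

theorem ScottIrred.closure [Preorder α] {S : Set α} (h : ScottIrred S) :
    ScottIrred (scottClosure S) := by
  refine ⟨h.1.mono (subset_scottClosure' S), fun B C hB hC hBC => ?_⟩
  rcases h.2 B C hB hC ((subset_scottClosure' S).trans hBC) with h' | h'
  · exact Or.inl (scottClosure_subset hB h')
  · exact Or.inr (scottClosure_subset hC h')

theorem irred_directed_union [Preorder α] {d : Set (OrderSob α)} (hne : d.Nonempty)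
    (hd : DirectedOn (· ≤ ·) d) : ScottIrred (⋃ A ∈ d, (A : Set α)) := by
  constructor
  · obtain ⟨A, hA⟩ := hne
    obtain ⟨x, hx⟩ := A.2.2.1
    exact ⟨x, Set.mem_biUnion hA hx⟩
  · intro B C hB hC hBC
    by_contra hcon
    rw [not_or, Set.iUnion₂_subset_iff, Set.iUnion₂_subset_iff] at hcon
    push Not at hcon
    obtain ⟨⟨X, hX, hXB⟩, ⟨Y, hY, hYC⟩⟩ := hcon
    obtain ⟨Z, hZ, hXZ, hYZ⟩ := hd X hX Y hY
    rcases Z.2.2.2 B C hB hC ((Set.subset_biUnion_of_mem hZ).trans hBC) with h | h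
    · exact hXB (Set.Subset.trans hXZ h)
    · exact hYC (Set.Subset.trans hYZ h)

theorem scottClosed_below [Preorder α] {B : Set α} (hB : ScottClosed B) :
    ScottClosed {A : OrderSob α | (A : Set α) ⊆ B} := by
  refine ⟨fun X Y hYX hX => Set.Subset.trans hYX hX, fun d hd hne hdir a ha => ?_⟩
  have hle : a ≤ (⟨scottClosure (⋃ A ∈ d, (A : Set α)), scottClosed_scottClosure _,
      (irred_directed_union hne hdir).closure⟩ : OrderSob α) := by
    apply ha.2
    intro X hX
    exact Set.Subset.trans (Set.subset_biUnion_of_mem (u := fun A : OrderSob α => (A : Set α)) hX)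
      (subset_scottClosure' _)
  exact Set.Subset.trans hle (scottClosure_subset hB (Set.iUnion₂_subset fun A hA => hd hA))

theorem irred_union [Preorder α] {d : Set (OrderSob α)} (hd : ScottIrred d) :
    ScottIrred (⋃ A ∈ d, (A : Set α)) := by
  constructor
  · obtain ⟨A, hA⟩ := hd.1
    obtain ⟨x, hx⟩ := A.2.2.1
    exact ⟨x, Set.mem_biUnion hA hx⟩
  · intro B C hB hC hBC
    rcases hd.2 _ _ (scottClosed_below hB) (scottClosed_below hC) (fun A hA =>
      A.2.2.2 B C hB hC ((Set.subset_biUnion_of_mem hA).trans hBC)) with h | h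
    · exact Or.inl (Set.iUnion₂_subset fun A hA => h hA)
    · exact Or.inr (Set.iUnion₂_subset fun A hA => h hA)

/-- the order sobrification D̂ of any dcpo D is strongly complete: every
irreducible subset 𝒜 of D̂ has a supremum in D̂, namely the Scott closure of ⋃𝒜. -/
theorem orderSob_strongly_complete [PartialOrder α] (hD : IsDcpo α)
    (𝒜 : Set (OrderSob α)) (h𝒜 : ScottIrred 𝒜) :
    ∃ h : ScottClosed (scottClosure (⋃ A ∈ 𝒜, (A : Set α))) ∧
          ScottIrred (scottClosure (⋃ A ∈ 𝒜, (A : Set α))),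
      IsLUB 𝒜 (⟨scottClosure (⋃ A ∈ 𝒜, (A : Set α)), h⟩ : OrderSob α) := by
  refine ⟨⟨scottClosed_scottClosure _, (irred_union h𝒜).closure⟩, fun X hX => ?_, fun Y hY => ?_⟩
  · exact Set.Subset.trans (Set.subset_biUnion_of_mem (u := fun A : OrderSob α => (A : Set α)) hX)
      (subset_scottClosure' _)
  · exact scottClosure_subset Y.2.1 (Set.iUnion₂_subset fun A hA => hY hA)

end HoZhao
end

section
/- Let D be a dcpo and let ℬ be a Scott-closed subset of the order sobrification D̂. Then ℬ ⊆ {A ∈ D̂ : A ⊆ ⋃ℬ}; and if moreover ℬ is strongly closed in D̂ (i.e., ℬ contains the supremum in D̂ of each of its irreducible subsets), then ℬ = {A ∈ D̂ : A ⊆ ⋃ℬ}. -/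
namespace HoZhao

variable {α : Type*}

/-- The principal ideal of a point, as an element of the order sobrification. -/
def eta [PartialOrder α] (a : α) : OrderSob α :=
  ⟨Set.Iic a, ⟨fun _ _ h hx => le_trans h hx, fun _ hd _ _ _ hb => hb.2 fun _ hx => hd hx⟩,
    ⟨a, le_refl a⟩, fun B C hB hC h => by
      rcases h (le_refl a : a ∈ Set.Iic a) with h | h
      · exact Or.inl fun x hx => hB.1 hx h
      · exact Or.inr fun x hx => hC.1 hx h⟩

theorem eta_le [PartialOrder α] (a : α) (T : OrderSob α) : eta a ≤ T ↔ a ∈ (T : Set α) :=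
  ⟨fun h => h (le_refl a : a ∈ Set.Iic a), fun h _ hx => T.2.1.1 hx h⟩

theorem eta_mono [PartialOrder α] {a b : α} (h : a ≤ b) : eta a ≤ eta b :=
  (eta_le a (eta b)).2 h

theorem eta_preimage_closed [PartialOrder α] {C : Set (OrderSob α)} (hC : ScottClosed C) :
    ScottClosed {a : α | eta a ∈ C} := by
  refine ⟨fun a b h ha => hC.1 (eta_mono h) ha, fun d hd hne hdir a ha => ?_⟩
  refine hC.2 (eta '' d) ?_ (hne.image _) ?_ (eta a) ⟨?_, ?_⟩
  · rintro _ ⟨x, hx, rfl⟩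
    exact hd hx
  · rintro _ ⟨x, hx, rfl⟩ _ ⟨y, hy, rfl⟩
    obtain ⟨z, hz, h1, h2⟩ := hdir x hx y hy
    exact ⟨eta z, ⟨z, hz, rfl⟩, eta_mono h1, eta_mono h2⟩
  · rintro _ ⟨x, hx, rfl⟩
    exact eta_mono (ha.1 hx)
  · intro T hT
    exact (eta_le a T).2 (T.2.1.2 d (fun x hx => (eta_le x T).1 (hT ⟨x, hx, rfl⟩)) hne hdir a ha)

/-- For ℬ Scott-closed in D̂ one has ℬ ⊆ {A ∈ D̂ : A ⊆ ⋃ℬ}, with equality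
when ℬ is strongly closed (contains the supremum of each of its irreducible subsets). -/
theorem closed_family_vs_counit [PartialOrder α] (hD : IsDcpo α)
    (ℬ : Set (OrderSob α)) (hℬ : ScottClosed ℬ) :
    ℬ ⊆ {A : OrderSob α | (A : Set α) ⊆ ⋃ B ∈ ℬ, (B : Set α)} ∧
    ((∀ 𝒜 : Set (OrderSob α), 𝒜 ⊆ ℬ → ScottIrred 𝒜 →
        ∀ S : OrderSob α, IsLUB 𝒜 S → S ∈ ℬ) →
      ℬ = {A : OrderSob α | (A : Set α) ⊆ ⋃ B ∈ ℬ, (B : Set α)}) := by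
  have h1 : ℬ ⊆ {A : OrderSob α | (A : Set α) ⊆ ⋃ B ∈ ℬ, (B : Set α)} :=
    fun A hA x hx => Set.mem_biUnion hA hx
  refine ⟨h1, fun hs => Set.Subset.antisymm h1 fun A hA => ?_⟩
  refine hs (eta '' (A : Set α)) ?_ ⟨A.2.2.1.image _, fun B C hB hC h => ?_⟩ A ⟨?_, ?_⟩
  · rintro _ ⟨x, hx, rfl⟩
    obtain ⟨B, hB, hxB⟩ := Set.mem_iUnion₂.1 (hA hx)
    exact hℬ.1 ((eta_le x B).2 hxB) hB
  · rcases A.2.2.2 _ _ (eta_preimage_closed hB) (eta_preimage_closed hC)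
      (fun x hx => h ⟨x, hx, rfl⟩) with h | h
    · exact Or.inl (Set.image_subset_iff.2 h)
    · exact Or.inr (Set.image_subset_iff.2 h)
  · rintro _ ⟨x, hx, rfl⟩
    exact (eta_le x A).2 hx
  · intro T hT x hx
    exact (eta_le x T).1 (hT ⟨x, hx, rfl⟩)

end HoZhao
end

section
/- For arbitrary dcpos D and E, the order sobrifications D̂ and Ê are order-isomorphic if and only if the lattices Γ(D) and Γ(E) of Scott-closed subsets (ordered by inclusion) are order-isomorphic. -/
namespace HoZhao

variable {α : Type*}

section Helpers

variable {β : Type*} [PartialOrder α] [PartialOrder β]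

theorem ScottClosed.union {B C : Set α} (hB : ScottClosed B) (hC : ScottClosed C) :
    ScottClosed (B ∪ C) := by
  refine ⟨hB.1.union hC.1, fun d hd hne hdir a ha => ?_⟩
  by_cases h : d ⊆ B
  · exact Or.inl (hB.2 d h hne hdir a ha)
  · obtain ⟨x, hx, hxB⟩ := Set.not_subset.1 h
    right
    refine hC.2 {y | y ∈ d ∧ x ≤ y} ?_ ⟨x, hx, le_rfl⟩ ?_ a ⟨?_, ?_⟩
    · rintro y ⟨hy, hxy⟩
      exact (hd hy).resolve_left fun h' => hxB (hB.1 hxy h')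
    · rintro y ⟨hy, hxy⟩ z ⟨hz, hxz⟩
      obtain ⟨w, hw, hyw, hzw⟩ := hdir y hy z hz
      exact ⟨w, ⟨hw, hxy.trans hyw⟩, hyw, hzw⟩
    · rintro y ⟨hy, _⟩
      exact ha.1 hy
    · intro b hb
      refine ha.2 fun y hy => ?_
      obtain ⟨w, hw, hyw, hxw⟩ := hdir y hy x hx
      exact hyw.trans (hb ⟨hw, hxw⟩)

theorem scottIrred_map (ψ : {S : Set α // ScottClosed S} ≃o {S : Set β // ScottClosed S})
    (A : {S : Set α // ScottClosed S}) (hA : ScottIrred A.1) : ScottIrred (ψ A).1 := by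
  constructor
  · by_contra h
    have h0 : ScottClosed (∅ : Set α) :=
      ⟨isLowerSet_empty, fun d hd hne => absurd (hne.mono hd) (by simp)⟩
    have h1 : ψ A ≤ ψ ⟨∅, h0⟩ := by
      intro x hx
      exact absurd ⟨x, hx⟩ h
    obtain ⟨x, hx⟩ := hA.1
    exact (ψ.le_iff_le.1 h1) hx
  · intro B C hB hC hBC
    let U : {S : Set α // ScottClosed S} :=
      ⟨(ψ.symm ⟨B, hB⟩).1 ∪ (ψ.symm ⟨C, hC⟩).1,
        (ψ.symm ⟨B, hB⟩).2.union (ψ.symm ⟨C, hC⟩).2⟩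
    have hUB : (⟨B, hB⟩ : {S : Set β // ScottClosed S}) ≤ ψ U :=
      ψ.symm_apply_le.1 (fun x hx => Or.inl hx)
    have hUC : (⟨C, hC⟩ : {S : Set β // ScottClosed S}) ≤ ψ U :=
      ψ.symm_apply_le.1 (fun x hx => Or.inr hx)
    have h1 : ψ A ≤ ψ U := by
      intro x hx
      rcases hBC hx with h | h
      · exact hUB h
      · exact hUC h
    have h2 : A ≤ U := ψ.le_iff_le.1 h1
    rcases hA.2 _ _ (ψ.symm ⟨B, hB⟩).2 (ψ.symm ⟨C, hC⟩).2 h2 with h | h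
    · exact Or.inl (ψ.le_symm_apply.1 (show A ≤ ψ.symm ⟨B, hB⟩ from h))
    · exact Or.inr (ψ.le_symm_apply.1 (show A ≤ ψ.symm ⟨C, hC⟩ from h))

/-- The principal ideal as a point of the order sobrification. -/
def pt (x : α) : OrderSob α :=
  ⟨Set.Iic x, ⟨isLowerSet_Iic x, fun _ hd _ _ _ ha => ha.2 hd⟩, ⟨x, le_rfl⟩,
    fun _ _ hB hC h => (h (le_refl x)).imp
      (fun hx _ hy => hB.1 hy hx) (fun hx _ hy => hC.1 hy hx)⟩

theorem pt_le {x : α} {A : OrderSob α} : pt x ≤ A ↔ x ∈ A.1 :=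
  ⟨fun h => h (le_refl x), fun h _ hy => A.2.1.1 hy h⟩

/-- The transported closed set. -/
def tr (φ : OrderSob α ≃o OrderSob β) (C : Set α) : Set β :=
  {y | (φ.symm (pt y)).1 ⊆ C}

theorem exists_sob (φ : OrderSob α ≃o OrderSob β) {C : Set α} (hC : ScottClosed C)
    {T : Set β} (hne : T.Nonempty)
    (hT : ∀ C₁ C₂ : Set α, ScottClosed C₁ → ScottClosed C₂ →
      T ⊆ tr φ C₁ ∪ tr φ C₂ → T ⊆ tr φ C₁ ∨ T ⊆ tr φ C₂)
    (hTC : T ⊆ tr φ C) : ∃ K : OrderSob α, K.1 ⊆ C ∧ T ⊆ (φ K).1 := by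
  let K : Set α := {x | ∀ Z : Set α, ScottClosed Z → T ⊆ tr φ Z → x ∈ Z}
  have hK : ScottClosed K := by
    refine ⟨fun x y hxy hx Z hZ h => hZ.1 hxy (hx Z hZ h), ?_⟩
    intro d hd hne hdir a ha Z hZ h
    exact hZ.2 d (fun x hx => hd hx Z hZ h) hne hdir a ha
  have hsub : ∀ y ∈ T, (φ.symm (pt y)).1 ⊆ K := fun y hy x hx Z _ h => h hy hx
  have hirr : ScottIrred K := by
    constructor
    · obtain ⟨y, hy⟩ := hne
      exact (φ.symm (pt y)).2.2.1.mono (hsub y hy)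
    · intro B D hB hD hBD
      refine (hT B D hB hD fun y hy => ?_).imp
        (fun h x hx => hx B hB h) (fun h x hx => hx D hD h)
      exact (φ.symm (pt y)).2.2.2 B D hB hD ((hsub y hy).trans hBD)
  refine ⟨⟨K, hK, hirr⟩, fun x hx => hx C hC hTC, fun y hy => ?_⟩
  exact pt_le.1 (φ.symm_apply_le.1 (hsub y hy))

theorem tr_closed (φ : OrderSob α ≃o OrderSob β) {C : Set α} (hC : ScottClosed C) :
    ScottClosed (tr φ C) := by
  have hlow : ∀ Z : Set α, IsLowerSet (tr φ Z) := by
    intro Z y z hzy hy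
    have : φ.symm (pt z) ≤ φ.symm (pt y) := φ.symm.monotone (pt_le.2 hzy)
    exact Set.Subset.trans this hy
  refine ⟨hlow C, fun d hd hne hdir a ha => ?_⟩
  obtain ⟨K, hKC, hK⟩ := exists_sob φ hC hne (by
    intro C₁ C₂ _ _ h
    by_contra hcon
    rw [not_or] at hcon
    obtain ⟨y, hy, hy1⟩ := Set.not_subset.1 hcon.1
    obtain ⟨z, hz, hz2⟩ := Set.not_subset.1 hcon.2
    obtain ⟨w, hw, hyw, hzw⟩ := hdir y hy z hz
    rcases h hw with h | h
    · exact hy1 (hlow _ hyw h)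
    · exact hz2 (hlow _ hzw h)) hd
  have h1 : φ.symm (pt a) ≤ K :=
    φ.symm_apply_le.2 (pt_le.2 ((φ K).2.1.2 d hK hne hdir a ha))
  exact Set.Subset.trans h1 hKC

theorem subset_tr (φ : OrderSob α ≃o OrderSob β) {C : Set α} (hC : ScottClosed C)
    (B : OrderSob β) : B.1 ⊆ tr φ C ↔ (φ.symm B).1 ⊆ C := by
  constructor
  · intro h
    obtain ⟨K, hKC, hK⟩ := exists_sob φ hC B.2.2.1
      (fun C₁ C₂ h₁ h₂ => B.2.2.2 _ _ (tr_closed φ h₁) (tr_closed φ h₂)) h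
    have h1 : φ.symm B ≤ K := φ.symm_apply_le.2 hK
    exact Set.Subset.trans h1 hKC
  · intro h y hy
    have h1 : φ.symm (pt y) ≤ φ.symm B := φ.symm.monotone (pt_le.2 hy)
    exact Set.Subset.trans h1 h

theorem tr_tr (φ : OrderSob α ≃o OrderSob β) {C : Set α} (hC : ScottClosed C) :
    tr φ.symm (tr φ C) = C := by
  ext x
  change (φ (pt x)).1 ⊆ tr φ C ↔ x ∈ C
  rw [subset_tr φ hC, φ.symm_apply_apply]
  exact ⟨fun h => h (le_refl x), fun h y hy => hC.1 hy h⟩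

theorem tr_mono (φ : OrderSob α ≃o OrderSob β) {C D : Set α} (h : C ⊆ D) :
    tr φ C ⊆ tr φ D := fun _ hy => Set.Subset.trans hy h

end Helpers

/-- For arbitrary dcpos D and E, D̂ ≅ Ê iff Γ(D) ≅ Γ(E). -/
theorem orderSob_iso_iff_gamma_iso {β : Type*} [PartialOrder α] [PartialOrder β]
    (hα : IsDcpo α) (hβ : IsDcpo β) :
    Nonempty (OrderSob α ≃o OrderSob β) ↔
      Nonempty ({S : Set α // ScottClosed S} ≃o {S : Set β // ScottClosed S}) := by
  constructor
  · rintro ⟨φ⟩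
    exact ⟨{
      toFun := fun C => ⟨tr φ C.1, tr_closed φ C.2⟩
      invFun := fun C => ⟨tr φ.symm C.1, tr_closed φ.symm C.2⟩
      left_inv := fun C => Subtype.ext (tr_tr φ C.2)
      right_inv := fun C => Subtype.ext (tr_tr φ.symm C.2)
      map_rel_iff' := by
        intro C D
        refine ⟨fun h => ?_, fun h => tr_mono φ h⟩
        have h1 := tr_mono φ.symm (show tr φ C.1 ⊆ tr φ D.1 from h)
        rw [tr_tr φ C.2, tr_tr φ D.2] at h1
        exact h1 }⟩
  · rintro ⟨ψ⟩
    exact ⟨{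
      toFun := fun A => ⟨(ψ ⟨A.1, A.2.1⟩).1, (ψ ⟨A.1, A.2.1⟩).2,
        scottIrred_map ψ ⟨A.1, A.2.1⟩ A.2.2⟩
      invFun := fun A => ⟨(ψ.symm ⟨A.1, A.2.1⟩).1, (ψ.symm ⟨A.1, A.2.1⟩).2,
        scottIrred_map ψ.symm ⟨A.1, A.2.1⟩ A.2.2⟩
      left_inv := fun A => Subtype.ext (by simp)
      right_inv := fun A => Subtype.ext (by simp)
      map_rel_iff' := by
        intro A B
        exact ψ.le_iff_le (x := ⟨A.1, A.2.1⟩) (y := ⟨B.1, B.2.1⟩) }⟩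

end HoZhao
end

section
/- Let D be a dcpo. For all closed irreducible subsets A', A of D, the relation A' ◁ A implies A' ≺ A (where ≺ is taken in the scpo D̂). Moreover, D is dominated if and only if, conversely, A' ≺ A implies A' ◁ A for all A', A ∈ D̂. -/
namespace HoZhao

variable {α : Type*}

/-- x' ≺ x : for every closed irreducible set A with x ≤ sup A, one has x' ∈ A. -/
def Prec [Preorder α] (x' x : α) : Prop :=
  ∀ A : Set α, ScottClosed A → ScottIrred A → ∀ a : α, IsLUB A a → x ≤ a → x' ∈ A

/-- A' ◁ A : A' is contained in ↓x for some x ∈ A. -/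
def Tri [Preorder α] (A' A : OrderSob α) : Prop :=
  ∃ x ∈ (A : Set α), (A' : Set α) ⊆ {y : α | y ≤ x}

/-- ∇A = the collection of all A' ◁ A. -/
def Nabla [Preorder α] (A : OrderSob α) : Set (OrderSob α) := {A' | Tri A' A}

/-- A dcpo is dominated if ∇A is Scott-closed in the order sobrification, for every A. -/
def Dominated (α : Type*) [Preorder α] : Prop :=
  ∀ A : OrderSob α, ScottClosed (Nabla A)

/-- The principal ideal of a point, as an element of the order sobrification. -/
def down [PartialOrder α] (x : α) : OrderSob α :=
  ⟨{y | y ≤ x}, ⟨fun _ _ h hb => le_trans h hb, fun _ hd _ _ _ ha => ha.2 fun _ hy => hd hy⟩,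
    ⟨x, le_refl x⟩, fun B C hB hC h => by
      rcases h (show x ∈ {y | y ≤ x} from le_refl x) with hx | hx
      · exact Or.inl fun y hy => hB.1 hy hx
      · exact Or.inr fun y hy => hC.1 hy hx⟩

theorem down_le [PartialOrder α] {x : α} {A : OrderSob α} (h : x ∈ A.1) : down x ≤ A :=
  fun _ hy => A.2.1.1 hy h

theorem down_closed [PartialOrder α] {S : Set (OrderSob α)} (hS : ScottClosed S) :
    ScottClosed {x : α | down x ∈ S} := by
  refine ⟨fun a b hba ha => hS.1 (show down b ≤ down a from fun y hy => le_trans hy hba) ha, ?_⟩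
  intro d hd hne hdir a ha
  refine hS.2 (Set.image down d) ?_ (hne.image _) ?_ (down a) ⟨?_, ?_⟩
  · rintro _ ⟨x, hx, rfl⟩
    exact hd hx
  · rintro _ ⟨x, hx, rfl⟩ _ ⟨y, hy, rfl⟩
    obtain ⟨z, hz, hxz, hyz⟩ := hdir x hx y hy
    exact ⟨down z, ⟨z, hz, rfl⟩, fun w hw => le_trans hw hxz, fun w hw => le_trans hw hyz⟩
  · rintro _ ⟨x, hx, rfl⟩
    exact fun w hw => le_trans hw (ha.1 hx)
  · intro C hC
    refine down_le (C.2.1.2 d (fun x hx => ?_) hne hdir a ha)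
    exact hC ⟨x, hx, rfl⟩ (le_refl x)

theorem inter_closed [Preorder α] (F : Set (Set α)) (hF : ∀ S ∈ F, ScottClosed S) :
    ScottClosed (⋂₀ F) :=
  ⟨fun _ _ h ha S hS => (hF S hS).1 h (ha S hS),
   fun d hd hne hdir a ha S hS => (hF S hS).2 d (fun _ hx => hd hx S hS) hne hdir a ha⟩

/-- If the union of a family is irreducible (tested against closed sets), then the supremum of
the family is contained in each closed set containing the members. -/
theorem lub_sub [PartialOrder α] {d : Set (OrderSob α)} (hne : d.Nonempty)
    (hirr : ∀ B C : Set α, ScottClosed B → ScottClosed C → (∀ E ∈ d, E.1 ⊆ B ∪ C) →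
      (∀ E ∈ d, E.1 ⊆ B) ∨ (∀ E ∈ d, E.1 ⊆ C))
    {a : OrderSob α} (ha : IsLUB d a) {C : Set α} (hC : ScottClosed C)
    (h : ∀ E ∈ d, E.1 ⊆ C) : a.1 ⊆ C := by
  let F : Set (Set α) := {S | ScottClosed S ∧ ∀ E ∈ d, E.1 ⊆ S}
  have hsub : ∀ E ∈ d, E.1 ⊆ ⋂₀ F := fun E hE x hx S hS => hS.2 E hE hx
  let K : OrderSob α := ⟨⋂₀ F, inter_closed F (fun S hS => hS.1), by
    refine ⟨?_, ?_⟩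
    · obtain ⟨E, hE⟩ := hne
      obtain ⟨x, hx⟩ := E.2.2.1
      exact ⟨x, hsub E hE hx⟩
    · intro B C hB hC hBC
      rcases hirr B C hB hC (fun E hE => (hsub E hE).trans hBC) with h | h
      · exact Or.inl fun x hx => hx B ⟨hB, h⟩
      · exact Or.inr fun x hx => hx C ⟨hC, h⟩⟩
  have hK : a ≤ K := ha.2 fun E hE => hsub E hE
  exact fun x hx => hK hx C ⟨hC, h⟩

theorem box_closed [PartialOrder α] {C : Set α} (hC : ScottClosed C) :
    ScottClosed {E : OrderSob α | E.1 ⊆ C} := by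
  refine ⟨fun a b hba ha x hx => ha (hba hx), ?_⟩
  intro d hd hne hdir a ha
  refine lub_sub hne ?_ ha hC (fun E hE => hd hE)
  intro B C hB hC h
  by_contra hcon
  push Not at hcon
  obtain ⟨⟨E, hE, hEB⟩, ⟨G, hG, hGC⟩⟩ := hcon
  obtain ⟨H, hH, hEH, hGH⟩ := hdir E hE G hG
  rcases H.2.2.2 B C hB hC (h H hH) with h' | h'
  · exact hEB fun x hx => h' (hEH hx)
  · exact hGC fun x hx => h' (hGH hx)

theorem tri_prec [PartialOrder α] (A' A : OrderSob α) (h : Tri A' A) : Prec A' A := by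
  obtain ⟨x, hx, hA'⟩ := h
  intro S hS hirr a ha hle
  have key : a.1 ⊆ {x : α | down x ∈ S} := by
    refine lub_sub hirr.1 ?_ ha (down_closed hS) (fun E hE y hy => hS.1 (down_le hy) hE)
    intro B C hB hC h
    exact hirr.2 {E | E.1 ⊆ B} {E | E.1 ⊆ C} (box_closed hB) (box_closed hC)
      (fun E hE => E.2.2.2 B C hB hC (h E hE))
  exact hS.1 (show A' ≤ down x from hA') (key (hle hx))

theorem tri_down [PartialOrder α] {x : α} {A : OrderSob α} (h : x ∈ A.1) : Tri (down x) A :=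
  ⟨x, h, fun _ hy => hy⟩

/-- ◁ implies ≺ on D̂; and D is dominated iff conversely ≺ implies ◁. -/
theorem tri_prec_and_dominated_iff [PartialOrder α] (hD : IsDcpo α) :
    (∀ A' A : OrderSob α, Tri A' A → Prec A' A) ∧
    (Dominated α ↔ ∀ A' A : OrderSob α, Prec A' A → Tri A' A) := by
  refine ⟨tri_prec, ?_, ?_⟩
  · intro hdom A' A hp
    refine hp (Nabla A) (hdom A) ⟨?_, ?_⟩ A ⟨?_, ?_⟩ le_rfl
    · obtain ⟨x, hx⟩ := A.2.2.1
      exact ⟨down x, tri_down hx⟩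
    · intro B C hB hC h
      have aux : ∀ S : Set (OrderSob α), ScottClosed S → A.1 ⊆ {x : α | down x ∈ S} →
          Nabla A ⊆ S := by
        rintro S hS hAS E ⟨x, hx, hE⟩
        exact hS.1 (show E ≤ down x from hE) (hAS hx)
      exact (A.2.2.2 _ _ (down_closed hB) (down_closed hC)
        (fun x hx => h (tri_down hx))).imp (aux B hB) (aux C hC)
    · rintro E ⟨x, hx, hE⟩
      exact fun y hy => A.2.1.1 (hE hy) hx
    · intro G hG x hx
      exact hG (tri_down hx) (le_refl x)
  · intro h A
    refine ⟨?_, ?_⟩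
    · rintro E G hGE ⟨x, hx, hE⟩
      exact ⟨x, hx, fun y hy => hE (hGE hy)⟩
    · intro d hd hne hdir a ha
      refine h a A fun S hS hirr b hb hle => ?_
      exact hS.2 d (fun E hE => tri_prec E A (hd hE) S hS hirr b hb hle) hne hdir a ha

end HoZhao
end

section
/- Every strongly complete partial order (scpo) is dominated: if D is a dcpo in which every irreducible subset has a supremum, then for every closed irreducible subset A of D, the collection ∇A is Scott-closed in D̂. -/
namespace HoZhao

variable {α : Type*}

/-- every strongly complete partial order is dominated. -/
theorem scpo_dominated [PartialOrder α] (hD : IsDcpo α)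
    (hscpo : ∀ A : Set α, ScottIrred A → ∃ a : α, IsLUB A a) :
    Dominated α := by
  intro A
  refine ⟨?_, ?_⟩
  · rintro B C hCB ⟨x, hx, hB⟩
    exact ⟨x, hx, fun y hy => hB (hCB hy)⟩
  · intro d hd hne hdir S hS
    choose s hs using fun B : OrderSob α => hscpo B.1 B.2.2
    have hmono : ∀ B C : OrderSob α, B ≤ C → s B ≤ s C := fun B C h =>
      (hs B).2 fun y hy => (hs C).1 (h hy)
    have hdir' : DirectedOn (· ≤ ·) (s '' d) := by
      rintro _ ⟨B, hB, rfl⟩ _ ⟨C, hC, rfl⟩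
      obtain ⟨E, hE, h1, h2⟩ := hdir B hB C hC
      exact ⟨s E, ⟨E, hE, rfl⟩, hmono _ _ h1, hmono _ _ h2⟩
    have hsub : s '' d ⊆ A.1 := by
      rintro _ ⟨B, hB, rfl⟩
      obtain ⟨x, hx, hBx⟩ := hd hB
      exact A.2.1.1 ((hs B).2 hBx) hx
    obtain ⟨z, hz⟩ := hD _ (hne.image s) hdir'
    refine ⟨z, A.2.1.2 _ hsub (hne.image s) hdir' z hz, ?_⟩
    have hcl : ScottClosed {y : α | y ≤ z} :=
      ⟨fun a b hba ha => le_trans hba ha, fun e he _ _ a ha => ha.2 fun y hy => he hy⟩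
    have hirr : ScottIrred {y : α | y ≤ z} := by
      refine ⟨⟨z, le_refl z⟩, fun B C hB hC h => ?_⟩
      rcases h (le_refl z) with h | h
      · exact Or.inl fun y hy => hB.1 hy h
      · exact Or.inr fun y hy => hC.1 hy h
    have : S ≤ (⟨_, hcl, hirr⟩ : OrderSob α) :=
      hS.2 fun B hB y hy => le_trans ((hs B).1 hy) (hz.1 ⟨B, hB, rfl⟩)
    exact this

end HoZhao
end

section
/- Every complete semilattice is dominated: if D is a dcpo in which every subset that is bounded above has a supremum, then for every closed irreducible subset A of D, the collection ∇A is Scott-closed in D̂. In particular every complete lattice is dominated. -/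
namespace HoZhao

variable {α : Type*}

theorem scottClosed_Iic [PartialOrder α] (s : α) : ScottClosed (Set.Iic s) :=
  ⟨isLowerSet_Iic s, fun _ hd _ _ _ ha => ha.2 fun _ hx => hd hx⟩

theorem scottIrred_Iic [PartialOrder α] (s : α) : ScottIrred (Set.Iic s) := by
  refine ⟨⟨s, le_refl s⟩, fun B C hB hC h => ?_⟩
  rcases h (show s ∈ Set.Iic s from le_refl s) with hs | hs
  · exact Or.inl fun y hy => hB.1 hy hs
  · exact Or.inr fun y hy => hC.1 hy hs

theorem dominated_aux [PartialOrder α] (hD : IsDcpo α)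
    (hbdd : ∀ S : Set α, BddAbove S → ∃ a : α, IsLUB S a) : Dominated α := by
  intro A
  refine ⟨?_, ?_⟩
  · rintro P Q hQP ⟨x, hx, hP⟩
    exact ⟨x, hx, fun y hy => hP (hQP hy)⟩
  · intro d hd hne hdir M hM
    let T : Set α := {s | ∃ P ∈ d, IsLUB (P : Set α) s}
    have hlub : ∀ P ∈ d, ∃ s, IsLUB (P : Set α) s := by
      intro P hP
      obtain ⟨x, _, hx⟩ := hd hP
      exact hbdd _ ⟨x, fun y hy => hx hy⟩
    have hTA : T ⊆ (A : Set α) := by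
      rintro s ⟨P, hP, hs⟩
      obtain ⟨x, hxA, hx⟩ := hd hP
      exact A.2.1.1 (hs.2 fun y hy => hx hy) hxA
    have hTne : T.Nonempty := by
      obtain ⟨P, hP⟩ := hne
      obtain ⟨s, hs⟩ := hlub P hP
      exact ⟨s, P, hP, hs⟩
    have hTdir : DirectedOn (· ≤ ·) T := by
      rintro s ⟨P, hP, hs⟩ t ⟨Q, hQ, ht⟩
      obtain ⟨R, hR, hPR, hQR⟩ := hdir P hP Q hQ
      obtain ⟨r, hr⟩ := hlub R hR
      exact ⟨r, ⟨R, hR, hr⟩, hs.2 fun y hy => hr.1 (hPR hy), ht.2 fun y hy => hr.1 (hQR hy)⟩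
    obtain ⟨s, hs⟩ := hD T hTne hTdir
    refine ⟨s, A.2.1.2 T hTA hTne hTdir s hs, ?_⟩
    have hle : M ≤ (⟨Set.Iic s, scottClosed_Iic s, scottIrred_Iic s⟩ : OrderSob α) := by
      refine hM.2 ?_
      intro P hP y hy
      obtain ⟨p, hp⟩ := hlub P hP
      exact le_trans (hp.1 hy) (hs.1 ⟨P, hP, hp⟩)
    exact fun y hy => hle hy

/-- every complete semilattice (dcpo where every set bounded above has a
supremum) is dominated; in particular every complete lattice is dominated. -/
theorem complete_semilattice_dominated {β : Type*} [PartialOrder α] [CompleteLattice β]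
    (hD : IsDcpo α) (hbdd : ∀ S : Set α, BddAbove S → ∃ a : α, IsLUB S a) :
    Dominated α ∧ Dominated β := by
  exact ⟨dominated_aux hD hbdd,
    dominated_aux (fun d _ _ => ⟨sSup d, isLUB_sSup d⟩) (fun S _ => ⟨sSup S, isLUB_sSup S⟩)⟩

end HoZhao
end

section
/- Every dcpo that is sober in its Scott topology is dominated. (More precisely: if every closed irreducible subset of the dcpo D is of the form ↓x for some x ∈ D, then D is dominated.) -/
namespace HoZhao

variable {α : Type*}

/-- every dcpo sober in its Scott topology (every closed irreducible subset
is a principal downset) is dominated. -/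
theorem sober_dominated [PartialOrder α] (hD : IsDcpo α)
    (hsob : ∀ A : Set α, ScottClosed A → ScottIrred A → ∃ x : α, A = {y : α | y ≤ x}) :
    Dominated α := by
  intro A
  obtain ⟨x, hx⟩ := hsob A.1 A.2.1 A.2.2
  have key : ∀ B : OrderSob α, B ∈ Nabla A ↔ B ≤ A := by
    intro B
    constructor
    · rintro ⟨z, hz, hB⟩ y hy
      exact A.2.1.1 (hB hy) hz
    · intro h
      refine ⟨x, by rw [hx]; exact le_refl x, fun y hy => ?_⟩
      rw [← hx]
      exact h hy
  refine ⟨fun B C hCB hB => (key C).2 (le_trans hCB ((key B).1 hB)), ?_⟩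
  intro d hd _ _ a ha
  exact (key a).2 (ha.2 fun B hB => (key B).1 (hd hB))

end HoZhao
end

section
/- Let D be a dcpo that is well-filtered and coherent in its Scott topology. Then for any nonempty subset A of D, the set ub(A) of upper bounds of A is compact and saturated in the Scott topology. Consequently, every dcpo which is well-filtered and coherent in its Scott topology is dominated. -/
namespace HoZhao

variable {α : Type*}

/-- The Scott topology on a preorder: open sets are the upper sets inaccessible by
suprema of nonempty directed sets. -/
def scottTop (α : Type*) [Preorder α] : TopologicalSpace α where
  IsOpen U := IsUpperSet U ∧ ∀ d : Set α, d.Nonempty → DirectedOn (· ≤ ·) d →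
    ∀ a : α, IsLUB d a → a ∈ U → (d ∩ U).Nonempty
  isOpen_univ := ⟨isUpperSet_univ, fun d hd _ _ _ _ => hd.imp fun x hx => ⟨hx, trivial⟩⟩
  isOpen_inter := by
    rintro U V ⟨hU, hU'⟩ ⟨hV, hV'⟩
    refine ⟨hU.inter hV, ?_⟩
    rintro d hd hdir a ha ⟨haU, haV⟩
    obtain ⟨x, hxd, hxU⟩ := hU' d hd hdir a ha haU
    obtain ⟨y, hyd, hyV⟩ := hV' d hd hdir a ha haV
    obtain ⟨z, hzd, hxz, hyz⟩ := hdir x hxd y hyd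
    exact ⟨z, hzd, hU hxz hxU, hV hyz hyV⟩
  isOpen_sUnion := by
    intro 𝒮 h
    refine ⟨isUpperSet_sUnion fun U hU => (h U hU).1, ?_⟩
    rintro d hd hdir a ha haU
    rw [Set.mem_sUnion] at haU
    obtain ⟨U, hU𝒮, haU⟩ := haU
    obtain ⟨x, hxd, hxU⟩ := (h U hU𝒮).2 d hd hdir a ha haU
    exact ⟨x, hxd, Set.mem_sUnion.2 ⟨U, hU𝒮, hxU⟩⟩

/-- Scott-open sets. -/
def ScottOpen [Preorder α] (U : Set α) : Prop := (scottTop α).IsOpen U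

/-- Compactness for the Scott topology. -/
def ScottCompact [Preorder α] (K : Set α) : Prop := @IsCompact α (scottTop α) K

/-- A set is saturated if it is an intersection of Scott-open sets. -/
def ScottSaturated [Preorder α] (S : Set α) : Prop :=
  ∃ 𝒰 : Set (Set α), (∀ U ∈ 𝒰, ScottOpen U) ∧ S = ⋂₀ 𝒰

/-- The Scott topology is well-filtered: any filtered family of compact saturated sets
whose intersection is contained in an open set has a member contained in that open set. -/
def WellFiltered (α : Type*) [Preorder α] : Prop :=
  ∀ 𝒦 : Set (Set α), 𝒦.Nonempty → DirectedOn (fun K L : Set α => L ⊆ K) 𝒦 →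
    (∀ K ∈ 𝒦, ScottCompact K ∧ ScottSaturated K) →
    ∀ U : Set α, ScottOpen U → ⋂₀ 𝒦 ⊆ U → ∃ K ∈ 𝒦, K ⊆ U

/-- The Scott topology is coherent: intersections of two compact saturated sets are
compact. -/
def Coherent (α : Type*) [Preorder α] : Prop :=
  ∀ K₁ K₂ : Set α, ScottCompact K₁ → ScottSaturated K₁ → ScottCompact K₂ →
    ScottSaturated K₂ → ScottCompact (K₁ ∩ K₂)

theorem aux_open_compl_Iic [PartialOrder α] (x : α) : ScottOpen (Set.Iic x)ᶜ := by
  refine ⟨(isLowerSet_Iic x).compl, ?_⟩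
  intro d _ _ a ha hax
  by_contra hne
  apply hax
  refine ha.2 ?_
  intro y hy
  by_contra hyx
  exact hne ⟨y, hy, hyx⟩

theorem aux_saturated [PartialOrder α] {S : Set α} (hS : IsUpperSet S) : ScottSaturated S := by
  refine ⟨{U | ∃ x, x ∉ S ∧ U = (Set.Iic x)ᶜ}, ?_, ?_⟩
  · rintro U ⟨x, _, rfl⟩
    exact aux_open_compl_Iic x
  · ext y
    simp only [Set.mem_sInter]
    constructor
    · rintro hy U ⟨x, hx, rfl⟩ hyx
      exact hx (hS hyx hy)
    · intro h
      by_contra hy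
      exact h _ ⟨y, hy, rfl⟩ le_rfl

theorem aux_upper [PartialOrder α] (A : Set α) : IsUpperSet (upperBounds A) :=
  fun _ _ hab ha _ hx => (ha hx).trans hab

theorem aux_compact_Ici [PartialOrder α] (x : α) : ScottCompact (Set.Ici x) := by
  letI := scottTop α
  refine isCompact_of_finite_subcover ?_
  intro ι U hU hc
  obtain ⟨i, hi⟩ := Set.mem_iUnion.1 (hc (Set.mem_Ici.2 le_rfl))
  refine ⟨{i}, ?_⟩
  intro y hy
  simp only [Finset.mem_singleton, Set.iUnion_iUnion_eq_left]
  exact (hU i).1 hy hi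

theorem aux_compact_fin [PartialOrder α] (hcoh : Coherent α) (F : Finset α) (hF : F.Nonempty) :
    ScottCompact (upperBounds (F : Set α)) := by
  classical
  induction hF using Finset.Nonempty.cons_induction with
  | singleton a =>
    rw [Finset.coe_singleton, upperBounds_singleton]
    exact aux_compact_Ici a
  | cons a s h hs ih =>
    rw [Finset.coe_cons, upperBounds_insert]
    exact hcoh _ _ (aux_compact_Ici a) (aux_saturated (isUpperSet_Ici a)) ih
      (aux_saturated (aux_upper _))

theorem aux_compact [PartialOrder α] (hwf : WellFiltered α) (hcoh : Coherent α)
    (A : Set α) (hA : A.Nonempty) : ScottCompact (upperBounds A) := by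
  classical
  letI := scottTop α
  refine isCompact_of_finite_subcover ?_
  intro ι U hU hc
  obtain ⟨a, ha⟩ := hA
  obtain ⟨K, ⟨F, hF, hFA, rfl⟩, hK⟩ := hwf
    {K | ∃ F : Finset α, F.Nonempty ∧ (F : Set α) ⊆ A ∧ K = upperBounds (F : Set α)}
    ⟨_, {a}, by simp, by simpa using ha, rfl⟩
    (by
      rintro _ ⟨F, hF, hFA, rfl⟩ _ ⟨G, hG, hGA, rfl⟩
      refine ⟨_, ⟨F ∪ G, hF.mono Finset.subset_union_left, ?_, rfl⟩, ?_, ?_⟩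
      · rw [Finset.coe_union]; exact Set.union_subset hFA hGA
      · exact upperBounds_mono_set (by simp)
      · exact upperBounds_mono_set (by simp))
    (by
      rintro _ ⟨F, hF, hFA, rfl⟩
      exact ⟨aux_compact_fin hcoh F hF, aux_saturated (aux_upper _)⟩)
    (⋃ i, U i) (isOpen_iUnion hU)
    (by
      intro y hy
      apply hc
      intro x hx
      exact hy _ ⟨{x}, by simp, by simpa using hx, rfl⟩ (by simp))
  have hKc : IsCompact (upperBounds (F : Set α)) := aux_compact_fin hcoh F hF
  obtain ⟨t, ht⟩ := hKc.elim_finite_subcover U hU hK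
  exact ⟨t, (upperBounds_mono_set hFA).trans ht⟩

theorem aux_Iic_mem [PartialOrder α] (x : α) :
    ScottClosed (Set.Iic x) ∧ ScottIrred (Set.Iic x) := by
  refine ⟨⟨isLowerSet_Iic x, fun d hd _ _ a ha => ha.2 hd⟩, ⟨x, le_rfl⟩, ?_⟩
  intro B C hB hC h
  rcases h (Set.mem_Iic.2 le_rfl) with hx | hx
  · exact Or.inl fun y hy => hB.1 hy hx
  · exact Or.inr fun y hy => hC.1 hy hx

theorem aux_open_compl [PartialOrder α] {A : Set α} (hA : ScottClosed A) : ScottOpen Aᶜ := by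
  refine ⟨hA.1.compl, ?_⟩
  intro d hd hdir a ha haA
  by_contra hne
  refine haA (hA.2 d ?_ hd hdir a ha)
  intro y hy
  by_contra hyA
  exact hne ⟨y, hy, hyA⟩

/-- in a well-filtered coherent dcpo the set of upper bounds of any nonempty
set is compact saturated; consequently such a dcpo is dominated. -/
theorem wellFiltered_coherent_dominated [PartialOrder α] (hD : IsDcpo α)
    (hwf : WellFiltered α) (hcoh : Coherent α) :
    (∀ A : Set α, A.Nonempty →
      ScottCompact (upperBounds A) ∧ ScottSaturated (upperBounds A)) ∧
    Dominated α := by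
  refine ⟨fun A hA => ⟨aux_compact hwf hcoh A hA, aux_saturated (aux_upper A)⟩, ?_⟩
  intro A
  constructor
  · rintro P Q hQP ⟨x, hx, hP⟩
    exact ⟨x, hx, fun y hy => hP (hQP hy)⟩
  · intro d hd hne hdir a ha
    have key : ∃ x ∈ (A : Set α), ∀ P ∈ d, x ∈ upperBounds (P : Set α) := by
      by_contra hcon
      obtain ⟨K, ⟨P, hP, rfl⟩, hK⟩ := hwf
        ((fun P : OrderSob α => upperBounds (P : Set α)) '' d) (hne.image _)
        (by
          rintro _ ⟨P, hP, rfl⟩ _ ⟨Q, hQ, rfl⟩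
          obtain ⟨R, hR, hPR, hQR⟩ := hdir P hP Q hQ
          exact ⟨_, ⟨R, hR, rfl⟩, upperBounds_mono_set hPR, upperBounds_mono_set hQR⟩)
        (by
          rintro _ ⟨P, hP, rfl⟩
          exact ⟨aux_compact hwf hcoh _ P.2.2.1, aux_saturated (aux_upper _)⟩)
        (A : Set α)ᶜ (aux_open_compl A.2.1)
        (by
          intro x hx hxA
          exact hcon ⟨x, hxA, fun P hP => hx _ ⟨P, hP, rfl⟩⟩)
      obtain ⟨x, hxA, hx⟩ := hd hP
      exact hK (fun y hy => hx hy) hxA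
    obtain ⟨x, hxA, hx⟩ := key
    have hle : a ≤ (⟨Set.Iic x, aux_Iic_mem x⟩ : OrderSob α) :=
      ha.2 fun P hP y hy => hx P hP hy
    exact ⟨x, hxA, hle⟩

end HoZhao
end

section
/- The closed irreducible subsets of Johnstone's dcpo 𝕊 are exactly 𝕊 itself and the down-closures ↓x of single points x ∈ 𝕊. In particular, since 𝕊 has no largest element, the Scott topology on 𝕊 is not sober. -/
namespace HoZhao

variable {α : Type*}

/-- The underlying set of Johnstone's dcpo: ℕ × ℕ∞. -/
def JS : Type := ℕ × ℕ∞

/-- Johnstone's order: (m,n) ≤ (m',n') iff (m = m' and n ≤ n'), or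
(n' = ∞, n is finite, and n ≤ m'). -/
instance : PartialOrder JS where
  le p q := (p.1 = q.1 ∧ p.2 ≤ q.2) ∨ (q.2 = ⊤ ∧ p.2 ≠ ⊤ ∧ p.2 ≤ (q.1 : ℕ∞))
  le_refl p := Or.inl ⟨rfl, le_rfl⟩
  le_trans p q r hpq hqr := by
    rcases hpq with ⟨h1, h2⟩ | ⟨h1, h2, h3⟩ <;>
      rcases hqr with ⟨g1, g2⟩ | ⟨g1, g2, g3⟩
    · exact Or.inl ⟨h1.trans g1, h2.trans g2⟩
    · refine Or.inr ⟨g1, ?_, h2.trans g3⟩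
      intro h
      rw [h] at h2
      exact g2 (top_le_iff.mp h2)
    · rw [h1] at g2
      refine Or.inr ⟨top_le_iff.mp g2, h2, ?_⟩
      rw [← g1]
      exact h3
    · exact absurd h1 g2
  le_antisymm p q hpq hqp := by
    rcases hpq with ⟨h1, h2⟩ | ⟨h1, h2, h3⟩ <;>
      rcases hqp with ⟨g1, g2⟩ | ⟨g1, g2, g3⟩
    · exact Prod.ext h1 (le_antisymm h2 g2)
    · rw [g1] at h2
      exact absurd (top_le_iff.mp h2) g2
    · rw [h1] at g2
      exact absurd (top_le_iff.mp g2) h2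
    · exact absurd g1 h2

theorem JS.le_def (p q : JS) : p ≤ q ↔
    (p.1 = q.1 ∧ p.2 ≤ q.2) ∨ (q.2 = ⊤ ∧ p.2 ≠ ⊤ ∧ p.2 ≤ (q.1 : ℕ∞)) := Iff.rfl

/-- The point `(m, n)`. -/
def JS.mk (m : ℕ) (n : ℕ∞) : JS := (m, n)

theorem JS.mk_le (m m' : ℕ) (n n' : ℕ∞) : JS.mk m n ≤ JS.mk m' n' ↔
    (m = m' ∧ n ≤ n') ∨ (n' = ⊤ ∧ n ≠ ⊤ ∧ n ≤ (m' : ℕ∞)) := Iff.rfl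

theorem JS.mk_inj {m m' : ℕ} {n n' : ℕ∞} (h : JS.mk m n = JS.mk m' n') : m = m' ∧ n = n' :=
  Prod.mk.inj h

theorem JS.cases (x : JS) : (∃ m, x = JS.mk m ⊤) ∨ ∃ m k : ℕ, x = JS.mk m (k : ℕ∞) := by
  obtain ⟨m, n⟩ := x
  induction n using ENat.recTopCoe with
  | top => exact Or.inl ⟨m, rfl⟩
  | coe k => exact Or.inr ⟨m, k, rfl⟩

theorem JS.top_le {m : ℕ} {x : JS} (h : JS.mk m ⊤ ≤ x) : x = JS.mk m ⊤ := by
  obtain ⟨a, b⟩ := x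
  rcases h with ⟨h1, h2⟩ | ⟨_, h2, _⟩
  · exact Prod.ext h1.symm (top_le_iff.mp h2)
  · exact absurd rfl h2

theorem JS.fin_le_fin {m k m' k' : ℕ} :
    JS.mk m (k : ℕ∞) ≤ JS.mk m' (k' : ℕ∞) ↔ m = m' ∧ k ≤ k' := by
  simp [JS.mk_le]

theorem JS.fin_le_top {m k m' : ℕ} :
    JS.mk m (k : ℕ∞) ≤ JS.mk m' ⊤ ↔ m = m' ∨ k ≤ m' := by
  simp [JS.mk_le]

/-- Scott-closedness via columns. -/
theorem closed_of_col {S : Set JS} (hl : IsLowerSet S)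
    (hc : ∀ m : ℕ, (∀ k : ℕ, JS.mk m (k : ℕ∞) ∈ S) → JS.mk m ⊤ ∈ S) : ScottClosed S := by
  refine ⟨hl, ?_⟩
  intro d hdS hne hdir a ha
  by_cases htop : ∃ m, JS.mk m ⊤ ∈ d
  · obtain ⟨m, hm⟩ := htop
    rw [JS.top_le (ha.1 hm)]
    exact hdS hm
  · obtain ⟨x, hx⟩ := hne
    rcases JS.cases x with ⟨m, rfl⟩ | ⟨m, k, rfl⟩
    · exact absurd ⟨m, hx⟩ htop
    have hcol : ∀ y ∈ d, ∃ j : ℕ, y = JS.mk m (j : ℕ∞) := by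
      intro y hy
      obtain ⟨z, hz, hxz, hyz⟩ := hdir _ hx _ hy
      rcases JS.cases z with ⟨m', rfl⟩ | ⟨m', k', rfl⟩
      · exact absurd ⟨m', hz⟩ htop
      rcases JS.cases y with ⟨m2, rfl⟩ | ⟨m2, k2, rfl⟩
      · exact absurd ⟨m2, hy⟩ htop
      have h1 := (JS.fin_le_fin.mp hxz).1
      have h2 := (JS.fin_le_fin.mp hyz).1
      exact ⟨k2, by rw [h1, h2]⟩
    have hub : JS.mk m ⊤ ∈ upperBounds d := by
      intro y hy
      obtain ⟨j, rfl⟩ := hcol y hy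
      exact JS.fin_le_top.mpr (Or.inl rfl)
    by_cases hb : ∃ N : ℕ, ∀ j : ℕ, JS.mk m (j : ℕ∞) ∈ d → j ≤ N
    · obtain ⟨N, hN⟩ := hb
      have hfin : ∃ j : ℕ, JS.mk m (j : ℕ∞) ∈ d ∧ ∀ i : ℕ, JS.mk m (i : ℕ∞) ∈ d → i ≤ j := by
        classical
        have hP := Nat.findGreatest_spec (P := fun j : ℕ => JS.mk m (j : ℕ∞) ∈ d) (hN k hx) hx
        exact ⟨_, hP, fun i hi => Nat.le_findGreatest (hN i hi) hi⟩
      obtain ⟨j, hj, hmax⟩ := hfin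
      refine hl (ha.2 ?_) (hdS hj)
      intro y hy
      obtain ⟨i, rfl⟩ := hcol y hy
      exact JS.fin_le_fin.mpr ⟨rfl, hmax i hy⟩
    · push Not at hb
      refine hl (ha.2 hub) (hc m fun n => ?_)
      obtain ⟨j, hj, hlt⟩ := hb n
      exact hl (JS.fin_le_fin.mpr ⟨rfl, hlt.le⟩) (hdS hj)

theorem col_of_closed {S : Set JS} (hS : ScottClosed S) (m : ℕ)
    (h : ∀ k : ℕ, JS.mk m (k : ℕ∞) ∈ S) : JS.mk m ⊤ ∈ S := by
  refine hS.2 (Set.range fun k : ℕ => JS.mk m (k : ℕ∞)) ?_ ⟨_, 0, rfl⟩ ?_ _ ⟨?_, ?_⟩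
  · rintro _ ⟨k, rfl⟩
    exact h k
  · rintro _ ⟨k, rfl⟩ _ ⟨l, rfl⟩
    exact ⟨_, ⟨max k l, rfl⟩, JS.fin_le_fin.mpr ⟨rfl, le_max_left _ _⟩,
      JS.fin_le_fin.mpr ⟨rfl, le_max_right _ _⟩⟩
  · rintro _ ⟨k, rfl⟩
    exact JS.fin_le_top.mpr (Or.inl rfl)
  · intro b hb
    rcases JS.cases b with ⟨m', rfl⟩ | ⟨m', k', rfl⟩
    · have h1 := hb ⟨m' + 1, rfl⟩
      rcases JS.fin_le_top.mp h1 with h2 | h2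
      · rw [h2]
      · omega
    · have h1 := (JS.fin_le_fin.mp (hb ⟨k' + 1, rfl⟩)).2
      omega

theorem eq_univ_of_unbounded {S : Set JS} (hS : ScottClosed S)
    (h : ∀ N : ℕ, ∃ m, N ≤ m ∧ JS.mk m ⊤ ∈ S) : S = Set.univ := by
  have hf : ∀ m k : ℕ, JS.mk m (k : ℕ∞) ∈ S := by
    intro m k
    obtain ⟨j, hj, hjS⟩ := h k
    exact hS.1 (JS.fin_le_top.mpr (Or.inr hj)) hjS
  ext x
  simp only [Set.mem_univ, iff_true]
  rcases JS.cases x with ⟨m, rfl⟩ | ⟨m, k, rfl⟩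
  · exact col_of_closed hS m (hf m)
  · exact hf m k

theorem closed_Iic (x : JS) : ScottClosed {y : JS | y ≤ x} :=
  ⟨fun _ _ hab ha => le_trans hab ha, fun _ hd _ _ _ ha => ha.2 fun _ hy => hd hy⟩

theorem irred_Iic (x : JS) : ScottIrred {y : JS | y ≤ x} := by
  refine ⟨⟨x, le_refl x⟩, fun B C hB hC h => ?_⟩
  rcases h (le_refl x) with hx | hx
  · exact Or.inl fun y hy => hB.1 hy hx
  · exact Or.inr fun y hy => hC.1 hy hx

theorem closed_univ : ScottClosed (Set.univ : Set JS) :=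
  ⟨fun _ _ _ _ => trivial, fun _ _ _ _ _ _ => trivial⟩

theorem irred_univ : ScottIrred (Set.univ : Set JS) := by
  refine ⟨⟨JS.mk 0 ⊤, trivial⟩, fun B C hB hC h => ?_⟩
  by_cases hu : ∀ N : ℕ, ∃ m, N ≤ m ∧ JS.mk m ⊤ ∈ B
  · exact Or.inl (eq_univ_of_unbounded hB hu).ge
  · push Not at hu
    obtain ⟨N, hN⟩ := hu
    refine Or.inr (eq_univ_of_unbounded hC fun K => ⟨max N K, le_max_right _ _, ?_⟩).ge
    exact (h (Set.mem_univ _)).resolve_left (hN _ (le_max_left _ _))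

theorem classify {A : Set JS} (hA : ScottClosed A) (hI : ScottIrred A) :
    A = Set.univ ∨ ∃ x : JS, A = {y : JS | y ≤ x} := by
  by_cases hu : ∀ N : ℕ, ∃ m, N ≤ m ∧ JS.mk m ⊤ ∈ A
  · exact Or.inl (eq_univ_of_unbounded hA hu)
  right
  push Not at hu
  obtain ⟨N, hN⟩ := hu
  by_cases hmax : ∃ m k : ℕ, JS.mk m (k : ℕ∞) ∈ A ∧ ∀ y ∈ A, JS.mk m (k : ℕ∞) ≤ y →
      y = JS.mk m (k : ℕ∞)
  · obtain ⟨m, k, hx, hmax⟩ := hmax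
    refine ⟨JS.mk m (k : ℕ∞), Set.Subset.antisymm ?_ fun y hy => hA.1 hy hx⟩
    have hC : ScottClosed {y | y ∈ A ∧ y ≠ JS.mk m (k : ℕ∞)} := by
      refine closed_of_col ?_ ?_
      · rintro a b hba ⟨ha, hne⟩
        refine ⟨hA.1 hba ha, ?_⟩
        rintro rfl
        exact hne (hmax a ha hba)
      · intro j hj
        refine ⟨col_of_closed hA j fun i => (hj i).1, fun he => ?_⟩
        exact ENat.top_ne_natCast k (JS.mk_inj he).2
    rcases hI.2 _ _ (closed_Iic (JS.mk m (k : ℕ∞))) hC (fun y hy => by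
      by_cases he : y = JS.mk m (k : ℕ∞)
      · exact Or.inl he.le
      · exact Or.inr ⟨hy, he⟩) with h | h
    · exact h
    · exact absurd rfl (h hx).2
  · have hcov : ∀ y ∈ A, ∃ m, JS.mk m ⊤ ∈ A ∧ y ≤ JS.mk m ⊤ := by
      intro y hy
      rcases JS.cases y with ⟨m, rfl⟩ | ⟨m, k, rfl⟩
      · exact ⟨m, hy, le_rfl⟩
      by_contra hno
      push Not at hno
      have hall : ∀ i : ℕ, JS.mk m ((k + i : ℕ) : ℕ∞) ∈ A := by
        intro i
        induction i with
        | zero => exact hy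
        | succ i ih =>
          push Not at hmax
          obtain ⟨z, hz, hle, hne⟩ := hmax m (k + i) ih
          rcases JS.cases z with ⟨m', rfl⟩ | ⟨m', k', rfl⟩
          · exact absurd (le_trans (JS.fin_le_fin.mpr ⟨rfl, Nat.le_add_right k i⟩) hle)
              (hno m' hz)
          · obtain ⟨rfl, h2⟩ := JS.fin_le_fin.mp hle
            have h3 : k' ≠ k + i := by
              rintro rfl
              exact hne rfl
            exact hA.1 (JS.fin_le_fin.mpr ⟨rfl, by omega⟩) hz
      refine hno m (col_of_closed hA m fun i => ?_) (JS.fin_le_top.mpr (Or.inl rfl))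
      exact hA.1 (JS.fin_le_fin.mpr ⟨rfl, Nat.le_add_left i k⟩) (hall i)
    obtain ⟨y0, hy0⟩ := hI.1
    obtain ⟨m, hm, -⟩ := hcov y0 hy0
    refine ⟨JS.mk m ⊤, Set.Subset.antisymm ?_ fun y hy => hA.1 hy hm⟩
    have hC : ScottClosed {y | ∃ j, j ≠ m ∧ JS.mk j ⊤ ∈ A ∧ y ≤ JS.mk j ⊤} := by
      refine closed_of_col ?_ ?_
      · rintro a b hba ⟨j, h1, h2, h3⟩
        exact ⟨j, h1, h2, le_trans hba h3⟩
      · intro i hi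
        obtain ⟨j, h1, h2, h3⟩ := hi N
        have hlt : j < N := by
          by_contra hge
          exact hN j (not_lt.mp hge) h2
        rcases JS.fin_le_top.mp h3 with rfl | h4
        · exact ⟨i, h1, h2, le_rfl⟩
        · omega
    rcases hI.2 _ _ (closed_Iic (JS.mk m ⊤)) hC (fun y hy => by
      obtain ⟨j, hj, hyj⟩ := hcov y hy
      by_cases he : j = m
      · subst he
        exact Or.inl hyj
      · exact Or.inr ⟨j, he, hj, hyj⟩) with h | h
    · exact h
    · obtain ⟨j, h1, -, h3⟩ := h hm
      exact absurd (JS.mk_inj (JS.top_le h3)).1 h1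

theorem no_top : ¬ ∃ x : JS, ∀ y : JS, y ≤ x := by
  rintro ⟨x, hx⟩
  have h0 := JS.top_le (hx (JS.mk 0 ⊤))
  have h1 := JS.top_le (hx (JS.mk 1 ⊤))
  exact absurd (JS.mk_inj (h0.symm.trans h1)).1 (by decide)

/-- the closed irreducible subsets of Johnstone's dcpo 𝕊 are exactly 𝕊
itself and the principal downsets ↓x; 𝕊 has no largest element, so its Scott topology is
not sober. -/
theorem johnstone_irreducibles :
    (∀ A : Set JS, (ScottClosed A ∧ ScottIrred A) ↔
      (A = Set.univ ∨ ∃ x : JS, A = {y : JS | y ≤ x})) ∧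
    (¬ ∃ x : JS, ∀ y : JS, y ≤ x) ∧
    ¬ (∀ A : Set JS, ScottClosed A → ScottIrred A → ∃ x : JS, A = {y : JS | y ≤ x}) := by
  refine ⟨fun A => ⟨fun h => classify h.1 h.2, ?_⟩, no_top, fun h => ?_⟩
  · rintro (rfl | ⟨x, rfl⟩)
    · exact ⟨closed_univ, irred_univ⟩
    · exact ⟨closed_Iic x, irred_Iic x⟩
  · obtain ⟨x, hx⟩ := h Set.univ closed_univ irred_univ
    exact no_top ⟨x, fun y => hx.le (Set.mem_univ y)⟩

end HoZhao
end

section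
/- The dcpo ℍ is not dominated: the family 𝓕 = {↓L_(n) : n ∈ ℕ} (where (n) is the one-element list) is a directed subset of ∇ℍ whose supremum in ℍ̂ is ℍ itself, yet ℍ ◁ ℍ fails; hence ∇ℍ is not Scott-closed in ℍ̂. -/
namespace HoZhao

variable {α : Type*}

/-- The underlying set of the dcpo ℍ: pairs (m, s) with m ∈ ℕ and s ∈ ℕ*. -/
abbrev HPt := ℕ × List ℕ

/-- (m, n::s) <₁ (m, n'::s) iff n < n'. -/
def hlt1 (p q : HPt) : Prop :=
  ∃ (m n n' : ℕ) (s : List ℕ), n < n' ∧ p = (m, n :: s) ∧ q = (m, n' :: s)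

/-- (m, t++s) <₂ (m, s) iff t ≠ ε. -/
def hlt2 (p q : HPt) : Prop :=
  ∃ (m : ℕ) (t s : List ℕ), t ≠ [] ∧ p = (m, t ++ s) ∧ q = (m, s)

/-- (m, t++s) <₃ (m', s) iff t ≠ ε and min(t) ≤ m'. -/
def hlt3 (p q : HPt) : Prop :=
  ∃ (m m' : ℕ) (t s : List ℕ), t ≠ [] ∧ t.minimum ≤ (m' : ℕ) ∧
    p = (m, t ++ s) ∧ q = (m', s)

/-- The strict order < on ℍ: <₁ ∪ <₂ ∪ <₃ ∪ (<₂;<₁) ∪ (<₃;<₁). -/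
def hlt (p q : HPt) : Prop :=
  hlt1 p q ∨ hlt2 p q ∨ hlt3 p q ∨ (∃ r, hlt2 p r ∧ hlt1 r q) ∨ (∃ r, hlt3 p r ∧ hlt1 r q)

/-- The order ≤ on ℍ: < together with equality. -/
def hle (p q : HPt) : Prop := hlt p q ∨ p = q

/-- Least upper bound with respect to a relation r. -/
def IsLubRel {γ : Type*} (r : γ → γ → Prop) (s : Set γ) (a : γ) : Prop :=
  (∀ x ∈ s, r x a) ∧ ∀ b, (∀ x ∈ s, r x b) → r a b

/-- Scott-closedness with respect to a relation r: a lower set containing the r-suprema of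
its nonempty r-directed subsets. -/
def ScottClosedRel {γ : Type*} (r : γ → γ → Prop) (S : Set γ) : Prop :=
  (∀ x y, r x y → y ∈ S → x ∈ S) ∧
  ∀ d : Set γ, d ⊆ S → d.Nonempty → DirectedOn r d → ∀ a, IsLubRel r d a → a ∈ S

/-- Irreducibility with respect to a relation r. -/
def ScottIrredRel {γ : Type*} (r : γ → γ → Prop) (A : Set γ) : Prop :=
  A.Nonempty ∧ ∀ B C : Set γ, ScottClosedRel r B → ScottClosedRel r C → A ⊆ B ∪ C →
    A ⊆ B ∨ A ⊆ C

/-- The order sobrification ℍ̂: closed irreducible subsets of ℍ, ordered by inclusion. -/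
abbrev HSob := {A : Set HPt // ScottClosedRel hle A ∧ ScottIrredRel hle A}

/-- A' ◁ A in ℍ̂: A' ⊆ ↓x for some x ∈ A. -/
def TriH (A' A : HSob) : Prop := ∃ x ∈ A.val, A'.val ⊆ {y : HPt | hle y x}

/-- ∇A in ℍ̂. -/
def NablaH (A : HSob) : Set HSob := {A' | TriH A' A}

def dom (s s' : List ℕ) : Prop := s = s' ∨ ∃ (n n' : ℕ) (r : List ℕ), n < n' ∧ s = n :: r ∧ s' = n' :: r

theorem dom_length {s s' : List ℕ} (h : dom s s') : s.length = s'.length := by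
  rcases h with rfl | ⟨n, n', r, _, rfl, rfl⟩ <;> simp

theorem min_le_iff (t : List ℕ) (m : ℕ) : t.minimum ≤ (m : ℕ) ↔ ∃ x ∈ t, x ≤ m := by
  constructor
  · intro h
    cases hm : t.minimum with
    | top => rw [hm] at h; simp at h
    | coe a =>
      refine ⟨a, List.minimum_mem hm, ?_⟩
      rw [hm] at h
      exact WithTop.coe_le_coe.1 h
  · rintro ⟨x, hx, hxm⟩
    exact (List.minimum_le_of_mem' hx).trans (WithTop.coe_le_coe.2 hxm)

theorem hle_iff (p q : HPt) : hle p q ↔ ∃ t s0, p.2 = t ++ s0 ∧ dom s0 q.2 ∧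
    (p.1 = q.1 ∨ ∃ x ∈ t, x ≤ q.1) := by
  constructor
  · rintro ((h | h | h | h | h) | h)
    · obtain ⟨m, n, n', s, h, rfl, rfl⟩ := h
      exact ⟨[], n :: s, rfl, Or.inr ⟨n, n', s, h, rfl, rfl⟩, Or.inl rfl⟩
    · obtain ⟨m, t, s, h, rfl, rfl⟩ := h
      exact ⟨t, s, rfl, Or.inl rfl, Or.inl rfl⟩
    · obtain ⟨m, m', t, s, h, h', rfl, rfl⟩ := h
      exact ⟨t, s, rfl, Or.inl rfl, Or.inr ((min_le_iff _ _).1 h')⟩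
    · obtain ⟨r, ⟨m, t, s, h, rfl, rfl⟩, ⟨m', n, n', s', h', h2, rfl⟩⟩ := h
      cases h2
      exact ⟨t, n :: s', rfl, Or.inr ⟨n, n', s', h', rfl, rfl⟩, Or.inl rfl⟩
    · obtain ⟨r, ⟨m, m1, t, s, h, h3, rfl, rfl⟩, ⟨m', n, n', s', h', h2, rfl⟩⟩ := h
      cases h2
      exact ⟨t, n :: s', rfl, Or.inr ⟨n, n', s', h', rfl, rfl⟩, Or.inr ((min_le_iff _ _).1 h3)⟩
    · subst h
      exact ⟨[], p.2, rfl, Or.inl rfl, Or.inl rfl⟩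
  · obtain ⟨m, s⟩ := p
    obtain ⟨m', s'⟩ := q
    rintro ⟨t, s0, h, hd, hm⟩
    simp only at h hd hm
    subst h
    by_cases ht : t = []
    · subst ht
      obtain rfl : m = m' := by simpa using hm
      rcases hd with rfl | ⟨n, n', r, hn, rfl, rfl⟩
      · exact Or.inr rfl
      · exact Or.inl (Or.inl ⟨m, n, n', r, hn, rfl, rfl⟩)
    · left; right
      rcases hm with rfl | hm
      · rcases hd with rfl | ⟨n, n', r, hn, rfl, rfl⟩
        · exact Or.inl ⟨m, t, s0, ht, rfl, rfl⟩
        · exact Or.inr (Or.inr (Or.inl ⟨(m, n :: r), ⟨m, t, _, ht, rfl, rfl⟩, m, n, n', r, hn, rfl, rfl⟩))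
      · have hm := (min_le_iff t m').2 hm
        rcases hd with rfl | ⟨n, n', r, hn, rfl, rfl⟩
        · exact Or.inr (Or.inl ⟨m, m', t, s0, ht, hm, rfl, rfl⟩)
        · exact Or.inr (Or.inr (Or.inr ⟨(m', n :: r), ⟨m, m', t, _, ht, hm, rfl, rfl⟩, m', n, n', r, hn, rfl, rfl⟩))

theorem hle_refl (p : HPt) : hle p p := Or.inr rfl

theorem hle_trans {p q r : HPt} (h1 : hle p q) (h2 : hle q r) : hle p r := by
  rw [hle_iff] at *
  obtain ⟨m1, s1⟩ := p
  obtain ⟨m2, s2⟩ := q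
  obtain ⟨m3, s3⟩ := r
  obtain ⟨t, s, rfl, hd, hm⟩ := h1
  obtain ⟨t', s', rfl, hd', hm'⟩ := h2
  simp only at *
  rcases t' with _ | ⟨a, t'⟩
  · obtain rfl : m2 = m3 := by simpa using hm'
    refine ⟨t, s, rfl, ?_, hm⟩
    simp only [List.nil_append] at hd
    rcases hd with rfl | ⟨n, n', r, hn, rfl, rfl⟩
    · exact hd'
    · rcases hd' with rfl | ⟨k, k', r', hk, h, rfl⟩
      · exact Or.inr ⟨n, n', r, hn, rfl, rfl⟩
      · cases h
        exact Or.inr ⟨n, k', r, hn.trans hk, rfl, rfl⟩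
  · have : ∃ b ≤ a, s = b :: (t' ++ s') := by
      rcases hd with rfl | ⟨n, n', r, hn, rfl, h⟩
      · exact ⟨a, le_rfl, rfl⟩
      · simp only [List.cons_append, List.cons.injEq] at h
        obtain ⟨rfl, rfl⟩ := h
        exact ⟨n, hn.le, rfl⟩
    obtain ⟨b, hb, rfl⟩ := this
    refine ⟨t ++ b :: t', s', by simp, hd', ?_⟩
    rcases hm' with rfl | ⟨x, hx, hx3⟩
    · rcases hm with rfl | ⟨x, hx, hx3⟩
      · exact Or.inl rfl
      · exact Or.inr ⟨x, by simp [hx], hx3⟩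
    · right
      rcases List.mem_cons.1 hx with rfl | hx
      · exact ⟨b, by simp, hb.trans hx3⟩
      · exact ⟨x, by simp [hx], hx3⟩

theorem hle_length {p q : HPt} (h : hle p q) : q.2.length ≤ p.2.length := by
  obtain ⟨t, s0, h, hd, -⟩ := (hle_iff _ _).1 h
  rw [h, ← dom_length hd]; simp

theorem hle_cons (m n n' : ℕ) (s : List ℕ) (h : n ≤ n') : hle (m, n :: s) (m, n' :: s) := by
  rw [hle_iff]
  refine ⟨[], n :: s, rfl, ?_, Or.inl rfl⟩
  rcases h.eq_or_lt with rfl | h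
  · exact Or.inl rfl
  · exact Or.inr ⟨n, n', s, h, rfl, rfl⟩

theorem hle_app (m : ℕ) (t s : List ℕ) : hle (m, t ++ s) (m, s) :=
  (hle_iff _ _).2 ⟨t, s, rfl, Or.inl rfl, Or.inl rfl⟩

theorem hle_lvl (m m' n : ℕ) (s : List ℕ) (h : n ≤ m') : hle (m, n :: s) (m', s) :=
  (hle_iff _ _).2 ⟨[n], s, rfl, Or.inl rfl, Or.inr ⟨n, by simp, h⟩⟩

theorem chain_lub (m : ℕ) (s : List ℕ) :
    IsLubRel hle (Set.range fun n : ℕ => ((m, n :: s) : HPt)) (m, s) := by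
  constructor
  · rintro _ ⟨n, rfl⟩
    exact hle_app m [n] s
  · rintro ⟨m', s'⟩ hb
    obtain ⟨N, hN⟩ : ∃ N, N = m' + s'.headD 0 + 1 := ⟨_, rfl⟩
    have h := hb _ ⟨N, rfl⟩
    rw [hle_iff] at h ⊢
    obtain ⟨t, s0, h, hd, hm⟩ := h
    simp only at h hd hm ⊢
    rcases t with _ | ⟨a, t⟩
    · exfalso
      simp only [List.nil_append] at h
      subst h
      rcases hd with rfl | ⟨n, n', r, hn, h, rfl⟩
      · simp only [List.headD_cons] at hN
        omega
      · simp only [List.cons.injEq] at h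
        simp only [List.headD_cons] at hN
        omega
    · simp only [List.cons_append, List.cons.injEq] at h
      obtain ⟨rfl, rfl⟩ := h
      refine ⟨t, s0, rfl, hd, ?_⟩
      rcases hm with h | ⟨x, hx, hx'⟩
      · exact Or.inl h
      · rcases List.mem_cons.1 hx with rfl | hx
        · omega
        · exact Or.inr ⟨x, hx, hx'⟩

theorem mem_of_chain {B : Set HPt} (hB : ScottClosedRel hle B) (m : ℕ) (s : List ℕ)
    (h : ∀ n, (m, n :: s) ∈ B) : (m, s) ∈ B := by
  refine hB.2 (Set.range fun n : ℕ => ((m, n :: s) : HPt)) ?_ (Set.range_nonempty _) ?_ _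
    (chain_lub m s)
  · rintro _ ⟨n, rfl⟩; exact h n
  · rintro _ ⟨a, rfl⟩ _ ⟨b, rfl⟩
    exact ⟨_, ⟨max a b, rfl⟩, hle_cons _ _ _ _ (le_max_left _ _), hle_cons _ _ _ _ (le_max_right _ _)⟩

theorem level_mem {B : Set HPt} (hB : ScottClosedRel hle B) (s : List ℕ)
    (h : ∀ n, ∃ m, n ≤ m ∧ (m, s) ∈ B) (m : ℕ) : (m, s) ∈ B := by
  apply mem_of_chain hB
  intro n
  obtain ⟨m', hm, hB'⟩ := h n
  exact hB.1 _ _ (hle_lvl m m' n s hm) hB'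

theorem level_irred (s : List ℕ) : ScottIrredRel hle {p : HPt | ∃ m : ℕ, hle p (m, s)} := by
  refine ⟨⟨(0, s), 0, hle_refl _⟩, fun B C hB hC h => ?_⟩
  have key : ∀ B : Set HPt, ScottClosedRel hle B → (∀ n, ∃ m, n ≤ m ∧ (m, s) ∈ B) →
      {p : HPt | ∃ m : ℕ, hle p (m, s)} ⊆ B := by
    rintro B hB h p ⟨m, hp⟩
    exact hB.1 _ _ hp (level_mem hB s h m)
  by_cases h1 : ∀ n, ∃ m, n ≤ m ∧ (m, s) ∈ B
  · exact Or.inl (key B hB h1)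
  · right
    apply key C hC
    push Not at h1
    obtain ⟨N, hN⟩ := h1
    intro n
    refine ⟨max n N, le_max_left _ _, ?_⟩
    exact (h ⟨max n N, hle_refl _⟩).resolve_left (hN _ (le_max_right _ _))

theorem level_eq_univ : {p : HPt | ∃ m : ℕ, hle p (m, [])} = Set.univ := by
  ext ⟨m, s⟩
  simp only [Set.mem_setOf_eq, Set.mem_univ, iff_true]
  exact ⟨m, by simpa using hle_app m s []⟩

theorem mem_level_iff (n : ℕ) (p : HPt) :
    (∃ m : ℕ, hle p (m, [n])) ↔ ∃ t k, p.2 = t ++ [k] ∧ k ≤ n := by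
  obtain ⟨m, s⟩ := p
  constructor
  · rintro ⟨m', h⟩
    obtain ⟨t, s0, h, hd, -⟩ := (hle_iff _ _).1 h
    rcases hd with rfl | ⟨k, k', r, hk, rfl, h2⟩
    · exact ⟨t, n, h, le_rfl⟩
    · simp only [List.cons.injEq] at h2
      obtain ⟨rfl, rfl⟩ := h2
      exact ⟨t, k, h, hk.le⟩
  · rintro ⟨t, k, h, hk⟩
    simp only at h
    subst h
    exact ⟨m, hle_trans (hle_app m t [k]) (hle_cons m k n [] hk)⟩

theorem level_closed (n : ℕ) : ScottClosedRel hle {p : HPt | ∃ m : ℕ, hle p (m, [n])} := by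
  constructor
  · rintro x y hxy ⟨m, hy⟩
    exact ⟨m, hle_trans hxy hy⟩
  intro d hd hne hdir a ha
  suffices h : ∃ b, (∃ m : ℕ, hle b (m, [n])) ∧ ∀ x ∈ d, hle x b by
    obtain ⟨b, ⟨m, hb⟩, hub⟩ := h
    exact ⟨m, hle_trans (ha.2 b hub) hb⟩
  obtain ⟨p0, hp0, hmin⟩ : ∃ p0 ∈ d, ∀ q ∈ d, p0.2.length ≤ q.2.length := by
    obtain ⟨p, hp, h⟩ := (measure (fun p : HPt => p.2.length)).wf.has_min d hne
    exact ⟨p, hp, fun q hq => not_lt.1 (h q hq)⟩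
  have hcof : ∀ b, (∀ q ∈ d, hle p0 q → hle q b) → ∀ x ∈ d, hle x b := by
    intro b hb x hx
    obtain ⟨z, hz, h1, h2⟩ := hdir p0 hp0 x hx
    exact hle_trans h2 (hb z hz h1)
  have hsame : ∀ q ∈ d, hle p0 q → p0.1 = q.1 ∧ dom p0.2 q.2 := by
    intro q hq h
    obtain ⟨t, s0, h1, hdm, hm⟩ := (hle_iff _ _).1 h
    have := hmin q hq
    rw [h1, ← dom_length hdm] at this
    obtain rfl : t = [] := by
      apply List.length_eq_zero_iff.1
      simp at this; simp [this]
    simp only [List.nil_append] at h1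
    rw [h1]
    exact ⟨by simpa using hm, hdm⟩
  obtain ⟨t, k, hp, hk⟩ := (mem_level_iff n p0).1 (hd hp0)
  obtain ⟨m, s⟩ := p0
  simp only at hp hsame
  subst hp
  rcases t with _ | ⟨a0, t⟩
  · refine ⟨(m, [n]), ⟨m, hle_refl _⟩, hcof _ ?_⟩
    rintro ⟨m', s'⟩ hq h
    obtain ⟨rfl, hdm⟩ := hsame _ hq h
    obtain ⟨t', k', h1, hk'⟩ := (mem_level_iff n _).1 (hd hq)
    have hl := dom_length hdm
    simp only at h1 hl
    subst h1
    obtain rfl : t' = [] := by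
      apply List.length_eq_zero_iff.1
      simp at hl; simp [hl]
    exact hle_cons _ _ _ _ hk'
  · refine ⟨(m, t ++ [k]), (mem_level_iff n _).2 ⟨t, k, rfl, hk⟩, hcof _ ?_⟩
    rintro ⟨m', s'⟩ hq h
    obtain ⟨rfl, hdm⟩ := hsame _ hq h
    simp only at hdm
    rcases hdm with rfl | ⟨b, b', r, -, h1, rfl⟩
    · exact hle_app m [a0] (t ++ [k])
    · simp only [List.cons_append, List.cons.injEq] at h1
      obtain ⟨rfl, rfl⟩ := h1
      exact hle_app m [b'] (t ++ [k])

/-- ℍ is not dominated: ℍ (= the whole set, a closed irreducible subset of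
itself) admits the directed family 𝓕 = {↓L_(n) : n ∈ ℕ} ⊆ ∇ℍ whose supremum in ℍ̂ is ℍ,
yet ℍ ◁ ℍ fails; hence ∇ℍ is not Scott-closed in ℍ̂. -/
theorem H_not_dominated :
    (ScottClosedRel hle (Set.univ : Set HPt) ∧ ScottIrredRel hle (Set.univ : Set HPt)) ∧
    ∀ Htop : HSob, Htop.val = Set.univ →
      (∃ F : ℕ → HSob,
        (∀ n : ℕ, (F n).val = {p : HPt | ∃ m : ℕ, hle p (m, [n])}) ∧
        DirectedOn (· ≤ ·) (Set.range F) ∧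
        Set.range F ⊆ NablaH Htop ∧
        IsLUB (Set.range F) Htop) ∧
      ¬ TriH Htop Htop ∧
      ¬ ScottClosed (NablaH Htop) := by
  have huniv : ScottClosedRel hle (Set.univ : Set HPt) :=
    ⟨fun _ _ _ _ => trivial, fun _ _ _ _ _ _ => trivial⟩
  refine ⟨⟨huniv, level_eq_univ ▸ level_irred []⟩, fun Htop hT => ?_⟩
  have hnot : ¬ TriH Htop Htop := by
    rintro ⟨⟨m, s⟩, -, h⟩
    rw [hT] at h
    have key : ∀ k, k = m := by
      intro k
      obtain ⟨t, s0, h1, -, h2⟩ := (hle_iff _ _).1 (h (Set.mem_univ ((k, []) : HPt)))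
      obtain ⟨rfl, -⟩ := List.append_eq_nil_iff.1 h1.symm
      simpa using h2
    have h0 := key 0
    have h1 := key 1
    omega
  have hF : ∃ F : ℕ → HSob,
        (∀ n : ℕ, (F n).val = {p : HPt | ∃ m : ℕ, hle p (m, [n])}) ∧
        DirectedOn (· ≤ ·) (Set.range F) ∧
        Set.range F ⊆ NablaH Htop ∧
        IsLUB (Set.range F) Htop := by
    refine ⟨fun n => ⟨_, level_closed n, level_irred [n]⟩, fun n => rfl, ?_, ?_, ?_, ?_⟩
    · rintro _ ⟨a, rfl⟩ _ ⟨b, rfl⟩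
      refine ⟨_, ⟨max a b, rfl⟩, ?_, ?_⟩
      · rintro p ⟨m, hp⟩
        exact ⟨m, hle_trans hp (hle_cons _ _ _ _ (le_max_left _ _))⟩
      · rintro p ⟨m, hp⟩
        exact ⟨m, hle_trans hp (hle_cons _ _ _ _ (le_max_right _ _))⟩
    · rintro _ ⟨n, rfl⟩
      refine ⟨(n, []), by rw [hT]; trivial, ?_⟩
      rintro p ⟨m, hp⟩
      exact hle_trans hp (hle_lvl m n n [] le_rfl)
    · rintro _ ⟨n, rfl⟩ p _
      rw [hT]; trivial
    · intro G hG p _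
      have hp : p ∈ {p : HPt | ∃ m : ℕ, hle p (m, [])} := by rw [level_eq_univ]; trivial
      obtain ⟨m, hp⟩ := hp
      refine G.2.1.1 _ _ hp (mem_of_chain G.2.1 m [] fun n => ?_)
      exact hG ⟨n, rfl⟩ ⟨m, hle_refl _⟩
  refine ⟨hF, hnot, fun hc => ?_⟩
  obtain ⟨F, -, hdir, hsub, hlub⟩ := hF
  exact hnot (hc.2 _ hsub (Set.range_nonempty F) hdir _ hlub)

end HoZhao
end

section
/- The poset 𝒯 (defined below on ℕ*) is a dcpo in which the up-set ↑s of every element s is linearly ordered (𝒯 is a tree with root ε); the map l : ℍ → 𝒯 sending (m,s) to s is Scott-continuous; and 𝒯 is sober in its Scott topology: every closed irreducible subset of 𝒯 equals ↓s for some s ∈ 𝒯. -/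
namespace HoZhao

variable {α : Type*}

/-- n::u ⊏₁ n'::u iff n < n'. -/
def tlt1 (s t : List ℕ) : Prop := ∃ (n n' : ℕ) (u : List ℕ), n < n' ∧ s = n :: u ∧ t = n' :: u

/-- u++t ⊏₂ t iff u ≠ ε. -/
def tlt2 (s t : List ℕ) : Prop := ∃ u : List ℕ, u ≠ [] ∧ s = u ++ t

/-- The strict order ⊏ on the tree 𝒯: ⊏₁ ∪ ⊏₂ ∪ (⊏₂;⊏₁). -/
def tlt (s t : List ℕ) : Prop := tlt1 s t ∨ tlt2 s t ∨ ∃ r, tlt2 s r ∧ tlt1 r t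

/-- The order ⊑ on 𝒯: ⊏ together with equality. -/
def tle (s t : List ℕ) : Prop := tlt s t ∨ s = t

theorem tle_iff (s t : List ℕ) :
    tle s t ↔ t = [] ∨ ∃ w n n' u, n ≤ n' ∧ s = w ++ n :: u ∧ t = n' :: u := by
  constructor
  · rintro ((⟨n, n', u, h, rfl, rfl⟩ | ⟨w, hw, rfl⟩ | ⟨r, ⟨w, hw, rfl⟩, ⟨n, n', u, h, rfl, rfl⟩⟩) | rfl)
    · exact Or.inr ⟨[], n, n', u, h.le, rfl, rfl⟩
    · cases t with
      | nil => exact Or.inl rfl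
      | cons n u => exact Or.inr ⟨w, n, n, u, le_rfl, rfl, rfl⟩
    · exact Or.inr ⟨w, n, n', u, h.le, rfl, rfl⟩
    · cases s with
      | nil => exact Or.inl rfl
      | cons n u => exact Or.inr ⟨[], n, n, u, le_rfl, rfl, rfl⟩
  · rintro (rfl | ⟨w, n, n', u, h, rfl, rfl⟩)
    · by_cases hs : s = []
      · exact Or.inr hs
      · exact Or.inl (Or.inr (Or.inl ⟨s, hs, by simp⟩))
    · rcases h.eq_or_lt with rfl | h
      · by_cases hw : w = []
        · subst hw; exact Or.inr rfl
        · exact Or.inl (Or.inr (Or.inl ⟨w, hw, rfl⟩))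
      · by_cases hw : w = []
        · subst hw; exact Or.inl (Or.inl ⟨n, n', u, h, rfl, rfl⟩)
        · exact Or.inl (Or.inr (Or.inr ⟨n :: u, ⟨w, hw, rfl⟩, ⟨n, n', u, h, rfl, rfl⟩⟩))

theorem tle_nil (s : List ℕ) : tle s [] := (tle_iff _ _).2 (Or.inl rfl)

theorem nil_tle (t : List ℕ) : tle [] t ↔ t = [] := by
  rw [tle_iff]; simp

theorem cons_tle (a : ℕ) (s t : List ℕ) :
    tle (a :: s) t ↔ (∃ n, a ≤ n ∧ t = n :: s) ∨ tle s t := by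
  rw [tle_iff, tle_iff]
  constructor
  · rintro (rfl | ⟨w, n, n', u, h, hw, rfl⟩)
    · exact Or.inr (Or.inl rfl)
    · cases w with
      | nil =>
        simp only [List.nil_append, List.cons.injEq] at hw
        obtain ⟨rfl, rfl⟩ := hw
        exact Or.inl ⟨n', h, rfl⟩
      | cons b w =>
        simp only [List.cons_append, List.cons.injEq] at hw
        exact Or.inr (Or.inr ⟨w, n, n', u, h, hw.2, rfl⟩)
  · rintro (⟨n, h, rfl⟩ | rfl | ⟨w, n, n', u, h, rfl, rfl⟩)
    · exact Or.inr ⟨[], a, n, s, h, rfl, rfl⟩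
    · exact Or.inl rfl
    · exact Or.inr ⟨a :: w, n, n', u, h, rfl, rfl⟩

theorem tle_rfl (s : List ℕ) : tle s s := Or.inr rfl

theorem tle_trans' {s t u : List ℕ} (h1 : tle s t) (h2 : tle t u) : tle s u := by
  induction s with
  | nil => rw [nil_tle] at h1; subst h1; exact h2
  | cons a s ih =>
    rw [cons_tle] at h1 ⊢
    rcases h1 with ⟨n, hn, rfl⟩ | h1
    · rw [cons_tle] at h2
      rcases h2 with ⟨m, hm, rfl⟩ | h2
      · exact Or.inl ⟨m, hn.trans hm, rfl⟩
      · exact Or.inr h2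
    · exact Or.inr (ih h1)

theorem tle_total {s t u : List ℕ} (h1 : tle s t) (h2 : tle s u) : tle t u ∨ tle u t := by
  induction s with
  | nil => rw [nil_tle] at h1; subst h1; exact Or.inr (tle_nil _)
  | cons a s ih =>
    rw [cons_tle] at h1 h2
    rcases h1 with ⟨n, hn, rfl⟩ | h1 <;> rcases h2 with ⟨m, hm, rfl⟩ | h2
    · rcases le_total n m with h | h
      · exact Or.inl ((cons_tle _ _ _).2 (Or.inl ⟨m, h, rfl⟩))
      · exact Or.inr ((cons_tle _ _ _).2 (Or.inl ⟨n, h, rfl⟩))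
    · exact Or.inl ((cons_tle _ _ _).2 (Or.inr h2))
    · exact Or.inr ((cons_tle _ _ _).2 (Or.inr h1))
    · exact ih h1 h2

theorem exists_least (x : List ℕ) (B : Set (List ℕ)) (hB : B.Nonempty)
    (h : ∀ b ∈ B, tle x b) : ∃ a ∈ B, ∀ b ∈ B, tle a b := by
  induction x with
  | nil =>
    obtain ⟨b, hb⟩ := hB
    refine ⟨b, hb, fun c hc => ?_⟩
    have h1 := (nil_tle _).1 (h b hb)
    have h2 := (nil_tle _).1 (h c hc)
    subst h1 h2; exact tle_rfl _
  | cons a s ih =>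
    by_cases hs : ∃ n, n :: s ∈ B
    · classical
      refine ⟨Nat.find hs :: s, Nat.find_spec hs, fun b hb => ?_⟩
      rcases (cons_tle _ _ _).1 (h b hb) with ⟨n, -, rfl⟩ | h1
      · exact (cons_tle _ _ _).2 (Or.inl ⟨n, Nat.find_min' hs hb, rfl⟩)
      · exact (cons_tle _ _ _).2 (Or.inr h1)
    · refine ih fun b hb => ?_
      rcases (cons_tle _ _ _).1 (h b hb) with ⟨n, -, rfl⟩ | h1
      · exact absurd ⟨n, hb⟩ hs
      · exact h1

theorem exists_lub (d : Set (List ℕ)) (hd : d.Nonempty) : ∃ a, IsLubRel tle d a := by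
  obtain ⟨x, hx⟩ := hd
  obtain ⟨a, ha, ha'⟩ := exists_least x {b | ∀ y ∈ d, tle y b} ⟨[], fun y _ => tle_nil y⟩
    (fun b hb => hb x hx)
  exact ⟨a, ha, ha'⟩

theorem hle_mono (p q : HPt) (h : hle p q) : tle p.2 q.2 := by
  rcases h with (⟨m, n, n', s, h, rfl, rfl⟩ | ⟨m, t, s, ht, rfl, rfl⟩ | ⟨m, m', t, s, ht, _, rfl, rfl⟩ |
    ⟨r, ⟨m, t, s, ht, rfl, rfl⟩, ⟨m', n, n', s', h, h1, rfl⟩⟩ |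
    ⟨r, ⟨m, m', t, s, ht, _, rfl, rfl⟩, ⟨m'', n, n', s', h, h1, rfl⟩⟩) | rfl
  · exact Or.inl (Or.inl ⟨n, n', s, h, rfl, rfl⟩)
  · exact Or.inl (Or.inr (Or.inl ⟨t, ht, rfl⟩))
  · exact Or.inl (Or.inr (Or.inl ⟨t, ht, rfl⟩))
  · cases h1
    exact Or.inl (Or.inr (Or.inr ⟨_, ⟨t, ht, rfl⟩, ⟨n, n', s', h, rfl, rfl⟩⟩))
  · cases h1
    exact Or.inl (Or.inr (Or.inr ⟨_, ⟨t, ht, rfl⟩, ⟨n, n', s', h, rfl, rfl⟩⟩))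
  · exact tle_rfl _

theorem hle_tail {x : HPt} {m n : ℕ} {u : List ℕ} (h : hle x (m, n :: u)) : hle x (m, u) := by
  rcases h with (⟨m, n, n', s, h, rfl, h1⟩ | ⟨m, t, s, ht, rfl, h1⟩ | ⟨m, m', t, s, ht, hm, rfl, h1⟩ |
    ⟨r, ⟨m, t, s, ht, rfl, rfl⟩, ⟨m', n, n', s', h, h2, h1⟩⟩ |
    ⟨r, ⟨m, m', t, s, ht, hm, rfl, rfl⟩, ⟨m'', n, n', s', h, h2, h1⟩⟩) | rfl
  · cases h1
    exact Or.inl (Or.inr (Or.inl ⟨_, [n], _, by simp, rfl, rfl⟩))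
  · cases h1
    exact Or.inl (Or.inr (Or.inl ⟨_, t ++ [n], _, by simp, by simp, rfl⟩))
  · cases h1
    refine Or.inl (Or.inr (Or.inr (Or.inl ⟨m, _, t ++ [n], _, by simp, ?_, by simp, rfl⟩)))
    rw [List.minimum_concat]
    exact (min_le_left _ _).trans hm
  · cases h1; cases h2
    exact Or.inl (Or.inr (Or.inl ⟨_, t ++ [n], _, by simp, by simp, rfl⟩))
  · cases h1; cases h2
    refine Or.inl (Or.inr (Or.inr (Or.inl ⟨m, _, t ++ [n], _, by simp, ?_, by simp, rfl⟩)))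
    rw [List.minimum_concat]
    exact (min_le_left _ _).trans hm
  · exact Or.inl (Or.inr (Or.inl ⟨_, [n], _, by simp, rfl, rfl⟩))

theorem hle_len {p q : HPt} (h : hle p q) (hl : p.2.length ≤ q.2.length) :
    p = q ∨ hlt1 p q := by
  rcases h with (h | ⟨m, t, s, ht, rfl, rfl⟩ | ⟨m, m', t, s, ht, _, rfl, rfl⟩ |
    ⟨r, ⟨m, t, s, ht, rfl, rfl⟩, ⟨m', n, n', s', h, h1, rfl⟩⟩ |
    ⟨r, ⟨m, m', t, s, ht, _, rfl, rfl⟩, ⟨m'', n, n', s', h, h1, rfl⟩⟩) | rfl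
  · exact Or.inr h
  · simp at hl; exact absurd hl ht
  · simp at hl; exact absurd hl ht
  · cases h1
    simp at hl; exact absurd hl ht
  · cases h1
    simp at hl; exact absurd hl ht
  · exact Or.inl rfl

theorem level_lub (d : Set HPt) (hne : d.Nonempty) (hd : DirectedOn hle d) (a : HPt)
    (ha : IsLubRel hle d a) : IsLubRel tle (Prod.snd '' d) a.2 := by
  constructor
  · rintro _ ⟨x, hx, rfl⟩
    exact hle_mono _ _ (ha.1 x hx)
  intro b hb
  have hmax : ∀ q ∈ d, (∀ x ∈ d, hle x q) → tle a.2 b := fun q hq h =>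
    tle_trans' (hle_mono _ _ (ha.2 q h)) (hb _ ⟨q, hq, rfl⟩)
  obtain ⟨p, hp, hmin⟩ : ∃ p ∈ d, ∀ q ∈ d, p.2.length ≤ q.2.length := by
    obtain ⟨p, hp, h⟩ := (measure (fun p : HPt => p.2.length)).wf.has_min d hne
    exact ⟨p, hp, fun q hq => not_lt.1 (h q hq)⟩
  obtain ⟨m, s⟩ := p
  cases s with
  | nil =>
    refine hmax _ hp fun x hx => ?_
    obtain ⟨z, hz, h1, h2⟩ := hd x hx _ hp
    rcases hle_len h2 (hmin z hz) with rfl | ⟨_, _, _, _, _, h, _⟩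
    · exact h1
    · cases h
  | cons n0 u =>
    have key : ∀ n, (m, n :: u) ∈ d → ∀ x ∈ d, ∃ k, n ≤ k ∧ (m, k :: u) ∈ d ∧ hle x (m, k :: u) := by
      intro n hn x hx
      obtain ⟨z, hz, h1, h2⟩ := hd x hx _ hn
      have hl : ((m, n :: u) : HPt).2.length ≤ z.2.length := by
        simpa using hmin z hz
      rcases hle_len h2 hl with rfl | ⟨_, _, k, _, hk, h, rfl⟩
      · exact ⟨n, le_rfl, hz, h1⟩
      · cases h
        exact ⟨k, hk.le, hz, h1⟩
    by_cases hN : ∃ N, (m, N :: u) ∈ d ∧ ∀ k, (m, k :: u) ∈ d → k ≤ N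
    · obtain ⟨N, hN, hN'⟩ := hN
      refine hmax _ hN fun x hx => ?_
      obtain ⟨k, hk, hkd, hx'⟩ := key N hN x hx
      obtain rfl := le_antisymm hk (hN' k hkd)
      exact hx'
    · push Not at hN
      have h1 : tle a.2 u := hle_mono _ (m, u) (ha.2 _ fun x hx => by
        obtain ⟨k, hk, hkd, hx'⟩ := key n0 hp x hx
        exact hle_tail hx')
      refine tle_trans' h1 ?_
      have hunb : ∀ M, ∃ k, M ≤ k ∧ (m, k :: u) ∈ d := by
        intro M
        induction M with
        | zero => exact ⟨n0, Nat.zero_le _, hp⟩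
        | succ M ih =>
          obtain ⟨k, hk, hkd⟩ := ih
          obtain ⟨j, hj, hj'⟩ := hN k hkd
          exact ⟨j, by omega, hj⟩
      have hb0 := hb _ ⟨_, hp, rfl⟩
      rcases (cons_tle _ _ _).1 hb0 with ⟨N, _, rfl⟩ | h
      · obtain ⟨k, hk, hkd⟩ := hunb (N + 1)
        rcases (cons_tle _ _ _).1 (hb _ ⟨_, hkd, rfl⟩) with ⟨M, hM, h⟩ | h
        · cases h; omega
        · exact h
      · exact h

theorem tree_sober (A : Set (List ℕ)) (hA : ScottClosedRel tle A) (hI : ScottIrredRel tle A) :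
    ∃ s : List ℕ, A = {t : List ℕ | tle t s} := by
  obtain ⟨⟨x, hx⟩, hI⟩ := hI
  obtain ⟨s, hs⟩ := exists_lub {y | y ∈ A ∧ tle x y} ⟨x, hx, tle_rfl x⟩
  have hsA : s ∈ A := by
    refine hA.2 {y | y ∈ A ∧ tle x y} (fun y hy => hy.1) ⟨x, hx, tle_rfl x⟩ ?_ s hs
    intro y hy z hz
    rcases tle_total hy.2 hz.2 with h | h
    · exact ⟨z, hz, h, tle_rfl z⟩
    · exact ⟨y, hy, tle_rfl y, h⟩
  have hxs : tle x s := hs.1 x ⟨hx, tle_rfl x⟩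
  have hsmax : ∀ y ∈ A, tle s y → tle y s := fun y hy h => hs.1 y ⟨hy, tle_trans' hxs h⟩
  refine ⟨s, Set.Subset.antisymm ?_ fun t ht => hA.1 t s ht hsA⟩
  have hB : ScottClosedRel tle {t | tle t s} :=
    ⟨fun y z h hz => tle_trans' h hz, fun d hd _ _ a ha => ha.2 s fun y hy => hd hy⟩
  have hC : ScottClosedRel tle {t | t ∈ A ∧ ¬ tle t s} := by
    refine ⟨fun y z h hz => ⟨hA.1 y z h hz.1, fun hy => ?_⟩, fun d hd hne hdir a ha => ?_⟩
    · rcases tle_total h hy with h' | h'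
      · exact hz.2 h'
      · exact hz.2 (hsmax z hz.1 h')
    · refine ⟨hA.2 d (fun y hy => (hd hy).1) hne hdir a ha, fun h => ?_⟩
      obtain ⟨y, hy⟩ := hne
      exact (hd hy).2 (tle_trans' (ha.1 y hy) h)
  rcases hI _ _ hB hC (fun y hy => by
    by_cases h : tle y s
    · exact Or.inl h
    · exact Or.inr ⟨hy, h⟩) with h | h
  · exact h
  · exact absurd (tle_rfl s) (h hsA).2

/-- 𝒯 is a dcpo; it is a tree with root ε (every up-set is linearly
ordered); the level map l : ℍ → 𝒯, (m,s) ↦ s is Scott-continuous (monotone and preserving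
suprema of nonempty directed sets); and 𝒯 is sober in its Scott topology: every closed
irreducible subset of 𝒯 is a principal downset. -/
theorem tree_dcpo_level_map_sober :
    (∀ d : Set (List ℕ), d.Nonempty → DirectedOn tle d → ∃ a : List ℕ, IsLubRel tle d a) ∧
    (∀ s : List ℕ, tle s []) ∧
    (∀ s t u : List ℕ, tle s t → tle s u → tle t u ∨ tle u t) ∧
    (∀ p q : HPt, hle p q → tle p.2 q.2) ∧
    (∀ d : Set HPt, d.Nonempty → DirectedOn hle d → ∀ a : HPt, IsLubRel hle d a →
      IsLubRel tle (Prod.snd '' d) a.2) ∧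
    (∀ A : Set (List ℕ), ScottClosedRel tle A → ScottIrredRel tle A →
      ∃ s : List ℕ, A = {t : List ℕ | tle t s}) := by
  exact ⟨fun d hd _ => exists_lub d hd, tle_nil, fun _ _ _ => tle_total, hle_mono, level_lub,
    tree_sober⟩

end HoZhao
end
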